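/- arXiv:1706.09675 — 2 statements merged into one kernel-verified Lean document; each statement's English description precedes it below -/
import Mathlib

section
/- Let H be a hypergraph containing a good leaf and let I = I(H) be its edge ideal in R = k[x_1,…,x_n]. Then: (i) the functions t ↦ depth R/I^t and t ↦ depth R/\overline{I^t} are non-increasing for t ≥ 1; (ii) the functions t ↦ reg R/I^t and t ↦ reg R/\overline{I^t} are non-decreasing for t ≥ 1. -/
open MvPolynomial

/-- The depth of the `R`-module `M` with respect to the ideal `J`: the supremum of
lengths of `M`-regular sequences consisting of elements of `J`. -/
noncomputable def idealDepth {R : Type*} [CommRing R] (J : Ideal R)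
    (M : Type*) [AddCommGroup M] [Module R M] : ℕ :=
  sSup {d : ℕ | ∃ rs : List R, rs.length = d ∧ (∀ r ∈ rs, r ∈ J) ∧
    RingTheory.Sequence.IsRegular M rs}

/-- The irrelevant maximal homogeneous ideal `(x₁, …, xₙ)` of the polynomial ring. -/
noncomputable def mxIdeal (k : Type*) [Field k] (n : ℕ) : Ideal (MvPolynomial (Fin n) k) :=
  Ideal.span (Set.range MvPolynomial.X)

/-- `depth R/I`, the depth of the quotient module with respect to the maximal
homogeneous ideal. -/
noncomputable def pdepth {k : Type*} [Field k] {n : ℕ}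
    (I : Ideal (MvPolynomial (Fin n) k)) : ℕ :=
  idealDepth (mxIdeal k n) (MvPolynomial (Fin n) k ⧸ I)

/-- `p` is homogeneous of degree `d ∈ ℤ` (where `0` is homogeneous of any degree). -/
def HomogOfDeg {k : Type*} [Field k] {n : ℕ} (p : MvPolynomial (Fin n) k) (d : ℤ) : Prop :=
  p = 0 ∨ ∃ m : ℕ, (m : ℤ) = d ∧ p.IsHomogeneous m

/-- A finite graded free resolution of `R/I`: free modules `Fᵢ = ⊕_j R(-D i j)` (of rank
`b i`, zero for `i > len`), differentials given by matrices `A i : Fᵢ₊₁ → Fᵢ` whose entries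
are homogeneous of the appropriate degrees, and an augmentation `F₀ → R/I` given by the
homogeneous column `v`, the whole complex being exact. -/
structure GradedFreeRes {k : Type*} [Field k] {n : ℕ}
    (I : Ideal (MvPolynomial (Fin n) k)) where
  len : ℕ
  b : ℕ → ℕ
  hb : ∀ i : ℕ, len < i → b i = 0
  D : (i : ℕ) → Fin (b i) → ℤ
  A : (i : ℕ) → Matrix (Fin (b i)) (Fin (b (i+1))) (MvPolynomial (Fin n) k)
  v : Fin (b 0) → MvPolynomial (Fin n) k
  hv : ∀ r, HomogOfDeg (v r) (D 0 r)
  hA : ∀ (i : ℕ) r c, HomogOfDeg (A i r c) (D (i+1) c - D i r)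
  haug : Function.Surjective
    (fun w : Fin (b 0) → MvPolynomial (Fin n) k => Ideal.Quotient.mk I (∑ r, w r * v r))
  hex0 : Function.Exact ((A 0).mulVec)
    (fun w : Fin (b 0) → MvPolynomial (Fin n) k => Ideal.Quotient.mk I (∑ r, w r * v r))
  hex : ∀ i : ℕ, Function.Exact ((A (i+1)).mulVec) ((A i).mulVec)

/-- The Castelnuovo–Mumford regularity `reg R/I`: the least `r` such that some finite
graded free resolution of `R/I` has all its `i`-th twists `≤ r + i`; equivalently (via the
minimal free resolution) `reg R/I = max { j - i : β_{i,j}(R/I) ≠ 0 }`. -/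
noncomputable def regQuot {k : Type*} [Field k] {n : ℕ}
    (I : Ideal (MvPolynomial (Fin n) k)) : ℤ :=
  sInf {r : ℤ | ∃ F : GradedFreeRes I, ∀ (i : ℕ) (j : Fin (F.b i)), F.D i j - (i : ℤ) ≤ r}

/-- The regularity of a (nonzero) homogeneous ideal: `reg I = reg R/I + 1`. -/
noncomputable def regIdeal {k : Type*} [Field k] {n : ℕ}
    (I : Ideal (MvPolynomial (Fin n) k)) : ℤ :=
  regQuot I + 1

/-- An ideal is homogeneous if it is generated by homogeneous polynomials. -/
def IsHomogeneousIdeal {k : Type*} [Field k] {n : ℕ}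
    (I : Ideal (MvPolynomial (Fin n) k)) : Prop :=
  ∃ T : Set (MvPolynomial (Fin n) k), (∀ p ∈ T, ∃ d : ℕ, p.IsHomogeneous d) ∧ I = Ideal.span T

/-- A monomial ideal: an ideal generated by monomials. -/
def IsMonomialIdeal {k : Type*} [Field k] {n : ℕ}
    (I : Ideal (MvPolynomial (Fin n) k)) : Prop :=
  ∃ T : Set (Fin n →₀ ℕ), I = Ideal.span ((fun m => monomial m (1 : k)) '' T)


/-- The edge ideal `I(H)` of the hypergraph on vertices `x_1, …, x_n` with edge set `E`. -/
noncomputable def edgeIdealH (k : Type*) [Field k] {n : ℕ} (E : Set (Finset (Fin n))) :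
    Ideal (MvPolynomial (Fin n) k) :=
  Ideal.span ((fun F => ∏ i ∈ F, MvPolynomial.X i) '' E)

/-- `F` is a good leaf of the hypergraph with edge set `E`: `F` is an edge and the
intersections of `F` with the other edges form a chain with respect to containment. -/
def IsGoodLeaf {n : ℕ} (E : Set (Finset (Fin n))) (F : Finset (Fin n)) : Prop :=
  F ∈ E ∧ ∀ G₁ ∈ E, ∀ G₂ ∈ E, G₁ ≠ F → G₂ ≠ F → (G₁ ∩ F ⊆ G₂ ∩ F ∨ G₂ ∩ F ⊆ G₁ ∩ F)

/-- The integral closure `\overline{J}` of an ideal `J`: generated by (in fact equal to the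
set of) all `r` satisfying an equation of integral dependence
`r^m + a₁ r^(m-1) + ⋯ + a_m = 0` with `aᵢ ∈ J^i`. -/
noncomputable def intClos {R : Type*} [CommRing R] (J : Ideal R) : Ideal R :=
  Ideal.span {r : R | ∃ m : ℕ, 0 < m ∧ ∃ a : ℕ → R,
    (∀ i : ℕ, 1 ≤ i → i ≤ m → a i ∈ J ^ i) ∧
    r ^ m + ∑ i ∈ Finset.Icc 1 m, a i * r ^ (m - i) = 0}

section PartA
open CategoryTheory Abelian RingTheory.Sequence

universe u

lemma mkShortExact {R : Type u} [CommRing R] {A B C : Type u} [AddCommGroup A] [Module R A]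
    [AddCommGroup B] [Module R B] [AddCommGroup C] [Module R C]
    (f : A →ₗ[R] B) (g : B →ₗ[R] C) (hf : Function.Injective f) (hg : Function.Surjective g)
    (h : Function.Exact f g) :
    (ModuleCat.shortComplexOfCompEqZero f g h.linearMap_comp_eq_zero).ShortExact where
  exact := ModuleCat.shortComplex_exact _ h
  mono_f := by simpa [ModuleCat.mono_iff_injective] using! hf
  epi_g := by simpa [ModuleCat.epi_iff_surjective] using! hg

lemma ext_step {R : Type u} [CommRing R] (x : R) (N : ModuleCat.{u} R)
    (hx : x ∈ Module.annihilator R N)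
    {C B M M' : Type u} [AddCommGroup C] [Module R C]
    [AddCommGroup B] [Module R B] [AddCommGroup M] [Module R M] [AddCommGroup M'] [Module R M']
    (i : C →ₗ[R] B) (p : B →ₗ[R] M') (q : B →ₗ[R] M)
    (hi : Function.Injective i) (hxi : Function.Injective (x • i))
    (hp : Function.Surjective p) (hq : Function.Surjective q)
    (h1 : Function.Exact i p) (h2 : Function.Exact (x • i) q) (d : ℕ)
    (hM : ∀ j < d, Subsingleton (Ext N (ModuleCat.of R M) j)) :
    ∀ j < d, Subsingleton (Ext N (ModuleCat.of R M') j) := by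
  have S1 := mkShortExact i p hi hp h1
  have S2 := mkShortExact (x • i) q hxi hq h2
  have hz : ∀ (j : ℕ) (e : Ext N (ModuleCat.of R C) j),
      e.comp (Ext.mk₀ (ModuleCat.ofHom (x • i))) (add_zero j) = 0 := by
    intro j e
    have e1 : ModuleCat.ofHom (x • i) = x • ModuleCat.ofHom i := rfl
    have h0 : x • 𝟙 N = 0 := by
      simp [← ModuleCat.lsmul_eq_smul_id, Module.mem_annihilator_iff_lsmul_eq_zero.mp hx]
    have h3 : x • e = (Ext.mk₀ (x • 𝟙 N)).comp e (zero_add j) := by simp [Ext.mk₀_smul]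
    rw [e1, Ext.mk₀_smul, Ext.comp_smul, ← Ext.smul_comp, h3, h0]
    simp
  have hB : ∀ j < d, ∀ e : Ext N (ModuleCat.of R B) j, e = 0 := by
    intro j hj e
    have := hM j hj
    obtain ⟨e1, h⟩ := Ext.covariant_sequence_exact₂ N S2 e (Subsingleton.elim _ _)
    rw [← h]; exact hz j e1
  have hC : ∀ j < d, ∀ e : Ext N (ModuleCat.of R C) (j+1), e = 0 := by
    intro j hj e
    have := hM j hj
    obtain ⟨e1, h⟩ := Ext.covariant_sequence_exact₁ N S2 e (hz _ e) rfl
    have h0 : e1 = 0 := Subsingleton.elim (α := Ext N (ModuleCat.of R M) j) _ _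
    rw [← h, h0]; simp
  intro j hj
  refine subsingleton_of_forall_eq 0 fun e => ?_
  obtain ⟨e1, h⟩ := Ext.covariant_sequence_exact₃ N S1 e rfl (hC j hj _)
  rw [← h, hB j hj e1]; simp

lemma exists_regular_colon {R : Type u} [CommRing R] [IsNoetherianRing R] (m J J0 J' : Ideal R)
    (hm : m ≠ ⊤) (x : R) (hxm : x ∈ m)
    (hreg : ∀ v, x * v ∈ J0 → v ∈ J0) (hle : J0 ≤ J') (hJ' : J' ≤ m)
    (hJ : J = J0 ⊔ Ideal.span {x} * J') (d : ℕ)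
    (h : ∃ rs : List R, rs.length = d ∧ (∀ r ∈ rs, r ∈ m) ∧ IsRegular (R ⧸ J) rs) :
    ∃ rs : List R, rs.length = d ∧ (∀ r ∈ rs, r ∈ m) ∧ IsRegular (R ⧸ J') rs := by
  have hJm : J ≤ m := by
    rw [hJ]
    exact sup_le (hle.trans hJ') (Ideal.mul_le_right.trans hJ')
  have hJJ' : J ≤ J' := by
    rw [hJ]
    exact sup_le hle Ideal.mul_le_right
  have hJ0J : J0 ≤ J := hJ ▸ le_sup_left
  have hlt : ∀ K : Ideal R, K ≤ m → m • (⊤ : Submodule R (R ⧸ K)) < ⊤ := by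
    intro K hK
    rw [lt_top_iff_ne_top]
    intro htop
    apply hm
    have : (Submodule.comap (Submodule.mkQ K) (m • (⊤ : Submodule R (R ⧸ K)))) = ⊤ := by
      rw [htop]; rfl
    rw [Submodule.comap_smul_top_of_surjective m _ (Submodule.mkQ_surjective _)] at this
    simpa [hK] using this
  have R1 := (ModuleCat.exists_isRegular_tfae m d (ModuleCat.of R (R ⧸ J)) (hlt J hJm))
  have R2 := (ModuleCat.exists_isRegular_tfae m d (ModuleCat.of R (R ⧸ J')) (hlt J' hJ'))
  have h1 := (R1.out 3 1).mp h
  refine (R2.out 1 3).mp ?_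
  have hx : x ∈ Module.annihilator R (ModuleCat.of R (Shrink.{u} (R ⧸ m))) := by
    change x ∈ Module.annihilator R (Shrink.{u} (R ⧸ m))
    rw [(Shrink.linearEquiv R (R ⧸ m)).annihilator_eq, Ideal.annihilator_quotient]
    exact hxm
  let C : Submodule R (R ⧸ J0) := Submodule.map (Submodule.mkQ J0) J'
  refine ext_step x _ hx (C := C) (B := R ⧸ J0) (M := R ⧸ J) (M' := R ⧸ J') C.subtype
    (Submodule.factor hle) (Submodule.factor hJ0J) C.subtype_injective ?_
    (Submodule.factor_surjective hle) (Submodule.factor_surjective hJ0J) ?_ ?_ d h1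
  · rw [injective_iff_map_eq_zero]
    rintro ⟨c, hc⟩ h0
    obtain ⟨c, hc', rfl⟩ := hc
    have h0' : x * c ∈ J0 := (Submodule.Quotient.mk_eq_zero J0).mp h0
    exact Subtype.ext ((Submodule.Quotient.mk_eq_zero J0).mpr (hreg _ h0'))
  · intro y
    obtain ⟨y, rfl⟩ := Submodule.mkQ_surjective _ y
    have key : Submodule.factor hle (Submodule.mkQ J0 y) = 0 ↔ y ∈ J' :=
      Submodule.Quotient.mk_eq_zero J'
    rw [key]
    constructor
    · intro hy; exact ⟨⟨_, y, hy, rfl⟩, rfl⟩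
    · rintro ⟨⟨_, z, hz, rfl⟩, h⟩
      have h' : z - y ∈ J0 := (Submodule.Quotient.eq J0).mp h
      have := J'.sub_mem hz (hle h')
      simpa using this
  · intro y
    obtain ⟨y, rfl⟩ := Submodule.mkQ_surjective _ y
    have key : Submodule.factor hJ0J (Submodule.mkQ J0 y) = 0 ↔ y ∈ J :=
      Submodule.Quotient.mk_eq_zero J
    rw [key]
    constructor
    · intro hy
      have hy' : y ∈ J0 ⊔ Ideal.span {x} * J' := hJ ▸ hy
      obtain ⟨a, ha, b, hb, rfl⟩ := Submodule.mem_sup.mp hy'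
      obtain ⟨c, hc, rfl⟩ := Ideal.mem_span_singleton_mul.mp hb
      refine ⟨⟨Submodule.mkQ J0 c, c, hc, rfl⟩, ?_⟩
      refine (Submodule.Quotient.eq J0 (x := x * c)).mpr ?_
      have : x * c - (a + x * c) = -a := by ring
      rw [this]; exact J0.neg_mem ha
    · rintro ⟨⟨_, z, hz, rfl⟩, h⟩
      have h' : x * z - y ∈ J0 := (Submodule.Quotient.eq J0).mp h
      have h3 : x * z ∈ J := by
        rw [hJ]
        exact Ideal.mem_sup_right (Ideal.mul_mem_mul (Ideal.mem_span_singleton_self x) hz)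
      have := J.sub_mem h3 (hJ0J h')
      simpa using this

lemma regular_length_le {R : Type u} [CommRing R] [IsNoetherianRing R] (rs : List R) :
    ∀ (M : Type u) [AddCommGroup M] [Module R M] [Module.Finite R M], IsRegular M rs →
    (rs.length : WithBot ℕ∞) ≤ Module.supportDim R M := by
  induction rs with
  | nil =>
    intro M _ _ _ h
    have := h.nontrivial
    have h2 := Module.supportDim_ne_bot_of_nontrivial R M
    simp only [List.length_nil, Nat.cast_zero]
    cases hh : Module.supportDim R M with
    | bot => exact absurd hh h2
    | coe a => exact_mod_cast zero_le
  | cons r rs ih =>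
    intro M _ _ _ h
    rw [isRegular_cons_iff] at h
    have h1 := ih (QuotSMulTop r M) h.2
    have h2 := Module.supportDim_quotSMulTop_succ_le_of_notMem_minimalPrimes (M := M) (x := r)
      (fun _ ↦ h.1.notMem_of_mem_minimalPrimes)
    refine le_trans ?_ h2
    push_cast [List.length_cons]
    gcongr

lemma pdepth_le_of {k : Type u} [Field k] {n : ℕ} (J J0 J' : Ideal (MvPolynomial (Fin n) k))
    (hm : mxIdeal k n ≠ ⊤) (x : MvPolynomial (Fin n) k) (hxm : x ∈ mxIdeal k n)
    (hreg : ∀ v, x * v ∈ J0 → v ∈ J0) (hle : J0 ≤ J') (hJ' : J' ≤ mxIdeal k n)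
    (hJ : J = J0 ⊔ Ideal.span {x} * J') : pdepth J ≤ pdepth J' := by
  unfold pdepth idealDepth
  apply csSup_le'
  rintro d hd
  apply le_csSup
  · refine ⟨n, ?_⟩
    rintro e ⟨rs, rfl, _, hr⟩
    have h1 := regular_length_le rs (MvPolynomial (Fin n) k ⧸ J') hr
    have h2 := Module.supportDim_le_ringKrullDim (MvPolynomial (Fin n) k)
      (MvPolynomial (Fin n) k ⧸ J')
    rw [MvPolynomial.ringKrullDim_of_isNoetherianRing, ringKrullDim_eq_zero_of_field] at h2
    have h3 := h1.trans h2
    simp only [Nat.card_eq_fintype_card, Fintype.card_fin, zero_add] at h3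
    exact_mod_cast h3
  · exact exists_regular_colon (mxIdeal k n) J J0 J' hm x hxm hreg hle hJ' hJ d hd

end PartA

section PartD
variable {k : Type*} [Field k] {n : ℕ}

def MI (J : Ideal (MvPolynomial (Fin n) k)) : Prop :=
  ∀ p ∈ J, ∀ e ∈ p.support, monomial e (1 : k) ∈ J

lemma MI_span (T : Set (Fin n →₀ ℕ)) :
    MI (Ideal.span ((fun e => monomial e (1 : k)) '' T)) := by
  intro p hp e he
  rw [mem_ideal_span_monomial_image] at hp ⊢
  intro e' he'
  have := support_monomial_subset he'
  simp only [Finset.mem_singleton] at this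
  subst this
  exact hp _ he

lemma mem_of_monomials {J : Ideal (MvPolynomial (Fin n) k)} {p : MvPolynomial (Fin n) k}
    (h : ∀ e ∈ p.support, monomial e (1 : k) ∈ J) : p ∈ J := by
  rw [p.as_sum]
  refine J.sum_mem fun e he => ?_
  have : monomial e (coeff e p) = C (coeff e p) * monomial e (1 : k) := by
    rw [C_mul_monomial, mul_one]
  rw [this]
  exact J.mul_mem_left _ (h e he)

lemma MI.mem_iff {J : Ideal (MvPolynomial (Fin n) k)} (hJ : MI J) {p : MvPolynomial (Fin n) k} :
    p ∈ J ↔ ∀ e ∈ p.support, monomial e (1 : k) ∈ J :=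
  ⟨hJ p, mem_of_monomials⟩

lemma MI.le_of {J K : Ideal (MvPolynomial (Fin n) k)} (hJ : MI J)
    (h : ∀ e, monomial e (1 : k) ∈ J → monomial e (1 : k) ∈ K) : J ≤ K := by
  intro p hp
  exact mem_of_monomials fun e he => h e (hJ p hp e he)

lemma MI.eq_of {J K : Ideal (MvPolynomial (Fin n) k)} (hJ : MI J) (hK : MI K)
    (h : ∀ e, monomial e (1 : k) ∈ J ↔ monomial e (1 : k) ∈ K) : J = K :=
  le_antisymm (hJ.le_of fun e => (h e).1) (hK.le_of fun e => (h e).2)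

lemma MI.mono {J : Ideal (MvPolynomial (Fin n) k)} {e e' : Fin n →₀ ℕ} (h : e ≤ e')
    (he : monomial e (1 : k) ∈ J) : monomial e' (1 : k) ∈ J := by
  have : monomial e' (1 : k) = monomial (e' - e) 1 * monomial e 1 := by
    rw [monomial_mul, tsub_add_cancel_of_le h, one_mul]
  rw [this]
  exact J.mul_mem_left _ he

/-- indicator exponent -/
noncomputable def indF (F : Finset (Fin n)) : Fin n →₀ ℕ := ∑ i ∈ F, Finsupp.single i 1

lemma indF_apply (F : Finset (Fin n)) (i : Fin n) : indF F i = if i ∈ F then 1 else 0 := by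
  classical
  simp [indF, Finsupp.single_apply]

lemma prod_X_eq (F : Finset (Fin n)) :
    (∏ i ∈ F, X i : MvPolynomial (Fin n) k) = monomial (indF F) 1 := by
  rw [indF, monomial_sum_one]
  rfl

def ES (E : Set (Finset (Fin n))) (t : ℕ) (e : Fin n →₀ ℕ) : Prop :=
  ∃ s : Multiset (Finset (Fin n)), s.card = t ∧ (∀ G ∈ s, G ∈ E) ∧ (s.map indF).sum ≤ e

lemma edge_pow (E : Set (Finset (Fin n))) (t : ℕ) :
    (edgeIdealH k E) ^ t = Ideal.span ((fun e => monomial e (1 : k)) '' {e | ES E t e}) := by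
  induction t with
  | zero =>
    rw [pow_zero, Ideal.one_eq_top, eq_comm, Ideal.eq_top_iff_one]
    exact Ideal.subset_span ⟨0, ⟨0, by simp, by simp, by simp⟩, rfl⟩
  | succ t ih =>
    rw [pow_succ, ih]
    unfold edgeIdealH
    rw [Ideal.span_mul_span']
    apply le_antisymm
    · rw [Ideal.span_le]
      rintro _ ⟨_, ⟨e, ⟨s, hs, hsE, hse⟩, rfl⟩, _, ⟨G, hG, rfl⟩, rfl⟩
      simp only [prod_X_eq]
      rw [monomial_mul, one_mul]
      refine Ideal.subset_span ⟨_, ⟨G ::ₘ s, by simp [hs], ?_, ?_⟩, rfl⟩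
      · intro G' hG'
        rcases Multiset.mem_cons.mp hG' with rfl | h
        · exact hG
        · exact hsE _ h
      · rw [Multiset.map_cons, Multiset.sum_cons, add_comm]
        gcongr
    · rw [Ideal.span_le]
      rintro _ ⟨e, ⟨s, hs, hsE, hse⟩, rfl⟩
      obtain ⟨G, hG⟩ := Multiset.card_pos_iff_exists_mem.mp (by rw [hs]; exact Nat.succ_pos t)
      obtain ⟨s', rfl⟩ := Multiset.exists_cons_of_mem hG
      rw [Multiset.map_cons, Multiset.sum_cons] at hse
      refine MI.mono hse ?_
      have : monomial (indF G + (s'.map indF).sum) (1 : k)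
        = monomial ((s'.map indF).sum) 1 * (∏ i ∈ G, X i) := by
        rw [prod_X_eq, monomial_mul, add_comm, one_mul]
      rw [this]
      refine Ideal.subset_span (Set.mul_mem_mul ⟨_, ⟨s', ?_, ?_, le_rfl⟩, rfl⟩ ⟨G, ?_, rfl⟩)
      · simpa using hs
      · exact fun G' h => hsE G' (Multiset.mem_cons_of_mem h)
      · exact hsE G (Multiset.mem_cons_self _ _)

lemma MI_edge_pow (E : Set (Finset (Fin n))) (t : ℕ) : MI ((edgeIdealH k E) ^ t) := by
  rw [edge_pow]; exact MI_span _

lemma ES_mono {E : Set (Finset (Fin n))} {t : ℕ} {e e' : Fin n →₀ ℕ} (h : e ≤ e')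
    (he : ES E t e) : ES E t e' := by
  obtain ⟨s, h1, h2, h3⟩ := he
  exact ⟨s, h1, h2, h3.trans h⟩

lemma mem_edge_pow (E : Set (Finset (Fin n))) (t : ℕ) (e : Fin n →₀ ℕ) :
    monomial e (1 : k) ∈ (edgeIdealH k E) ^ t ↔ ES E t e := by
  rw [edge_pow, mem_ideal_span_monomial_image]
  constructor
  · intro h
    obtain ⟨e', he', hle⟩ := h e (by simp [mem_support_iff])
    exact ES_mono hle he'
  · intro h e' he'
    have := support_monomial_subset he'
    simp only [Finset.mem_singleton] at this
    subst this
    exact ⟨_, h, le_rfl⟩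

lemma msum_apply (s : Multiset (Finset (Fin n))) (i : Fin n) :
    (s.map indF).sum i = (s.map (fun G => indF G i)).sum := by
  induction s using Multiset.induction_on with
  | empty => simp
  | cons a s ih => simp [ih]

lemma ES_colon {E : Set (Finset (Fin n))} {F : Finset (Fin n)} (hF : IsGoodLeaf E F)
    {t : ℕ} {e : Fin n →₀ ℕ} (h : ES E (t + 1) (e + indF F)) : ES E t e := by
  obtain ⟨s, hs, hsE, hse⟩ := h
  by_cases hFs : F ∈ s
  · obtain ⟨s', rfl⟩ := Multiset.exists_cons_of_mem hFs
    refine ⟨s', by simpa using hs, fun G h => hsE G (Multiset.mem_cons_of_mem h), ?_⟩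
    rw [Multiset.map_cons, Multiset.sum_cons, add_comm] at hse
    exact le_of_add_le_add_right hse
  · obtain ⟨G0, hG0⟩ := Multiset.card_pos_iff_exists_mem.mp (by rw [hs]; exact Nat.succ_pos t)
    obtain ⟨G, hGs, hG⟩ := Finset.exists_max_image s.toFinset (fun G => (G ∩ F).card)
      ⟨G0, by simpa using hG0⟩
    rw [Multiset.mem_toFinset] at hGs
    have hmax : ∀ G' ∈ s, G' ∩ F ⊆ G ∩ F := by
      intro G' hG'
      rcases hF.2 G' (hsE _ hG') G (hsE _ hGs) (fun h => hFs (h ▸ hG')) (fun h => hFs (h ▸ hGs))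
        with h | h
      · exact h
      · exact (Finset.eq_of_subset_of_card_le h (hG G' (by simpa using hG'))).ge
    obtain ⟨s', rfl⟩ := Multiset.exists_cons_of_mem hGs
    refine ⟨s', by simpa using hs, fun G h => hsE G (Multiset.mem_cons_of_mem h), ?_⟩
    intro i
    have hi := hse i
    rw [Multiset.map_cons, Multiset.sum_cons, Finsupp.add_apply, Finsupp.add_apply] at hi
    rw [indF_apply, indF_apply] at hi
    by_cases hiF : i ∈ F
    · by_cases hiG : i ∈ G
      · simp only [hiF, hiG, if_true] at hi
        omega
      · have : (s'.map indF).sum i = 0 := by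
          rw [msum_apply]
          apply Multiset.sum_eq_zero
          intro x hx
          obtain ⟨G', hG', rfl⟩ := Multiset.mem_map.mp hx
          rw [indF_apply, if_neg]
          intro hiG'
          have := hmax G' (Multiset.mem_cons_of_mem hG') (Finset.mem_inter.mpr ⟨hiG', hiF⟩)
          exact hiG (Finset.mem_inter.mp this).1
        omega
    · simp only [hiF, if_false] at hi
      omega

lemma ES_mul {E : Set (Finset (Fin n))} {F : Finset (Fin n)} (hF : F ∈ E)
    {t : ℕ} {e : Fin n →₀ ℕ} (h : ES E t e) : ES E (t + 1) (e + indF F) := by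
  obtain ⟨s, hs, hsE, hse⟩ := h
  refine ⟨F ::ₘ s, by simp [hs], ?_, ?_⟩
  · intro G' hG'
    rcases Multiset.mem_cons.mp hG' with rfl | h
    · exact hF
    · exact hsE _ h
  · rw [Multiset.map_cons, Multiset.sum_cons, add_comm]
    gcongr

lemma ES_colon_iff {E : Set (Finset (Fin n))} {F : Finset (Fin n)} (hF : IsGoodLeaf E F)
    {t j : ℕ} {e : Fin n →₀ ℕ} : ES E (t + j) (e + j • indF F) ↔ ES E t e := by
  induction j generalizing e with
  | zero => simp
  | succ j ih =>
    rw [← ih, ← add_assoc, succ_nsmul, ← add_assoc]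
    exact ⟨ES_colon hF, ES_mul hF.1⟩

end PartD

section PartC
variable {k : Type*} [Field k] {n : ℕ}

noncomputable def phiC (k : Type*) [Field k] (n : ℕ) :
    Polynomial (MvPolynomial (Fin n) k) →+*
      MvPolynomial (Fin n) (Polynomial (MvPolynomial (Fin n) k)) :=
  Polynomial.eval₂RingHom
    (MvPolynomial.eval₂Hom ((C : _ →+* MvPolynomial (Fin n) (Polynomial (MvPolynomial (Fin n) k))).comp
      ((Polynomial.C).comp (C : k →+* MvPolynomial (Fin n) k)))
      (fun i => C (Polynomial.C (X i)) * X i)) (C Polynomial.X)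

lemma phiC_monomial (j : ℕ) (e : Fin n →₀ ℕ) (c : k) :
    phiC k n (Polynomial.monomial j (monomial e c)) =
      monomial e (Polynomial.monomial j (monomial e c)) := by
  have h1 : (monomial e c : MvPolynomial (Fin n) k) = C c * e.prod fun i m => X i ^ m :=
    monomial_eq
  rw [monomial_eq (s := e) (a := Polynomial.monomial j (monomial e c))]
  simp only [phiC, Polynomial.coe_eval₂RingHom, Polynomial.eval₂_monomial, coe_eval₂Hom,
    eval₂_monomial, mul_pow, Finsupp.prod, Finset.prod_mul_distrib, RingHom.comp_apply]
  rw [← Polynomial.C_mul_X_pow_eq_monomial, h1]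
  simp only [map_mul, map_pow, Finsupp.prod, map_prod]
  ring

lemma phiC_apply (j : ℕ) (p : MvPolynomial (Fin n) k) :
    phiC k n (Polynomial.monomial j p) =
      ∑ e ∈ p.support, monomial e (Polynomial.monomial j (monomial e (coeff e p))) := by
  conv_lhs => rw [p.as_sum]
  simp only [map_sum, phiC_monomial]

lemma phiC_lift (J : Ideal (MvPolynomial (Fin n) k)) (hJ : ∀ i, MI (J ^ i)) (j : ℕ)
    (p : MvPolynomial (Fin n) k) (hp : p ∈ J ^ j) :
    ∃ b : MvPolynomial (Fin n) (reesAlgebra J),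
      map (algebraMap (reesAlgebra J) (Polynomial (MvPolynomial (Fin n) k))) b =
        phiC k n (Polynomial.monomial j p) := by
  have hmem : ∀ e, monomial e (coeff e p) ∈ J ^ j := by
    intro e
    by_cases he : e ∈ p.support
    · have : monomial e (coeff e p) = C (coeff e p) * monomial e (1 : k) := by
        rw [C_mul_monomial, mul_one]
      rw [this]
      exact Ideal.mul_mem_left _ _ (hJ j p hp e he)
    · rw [notMem_support_iff.mp he]; simp
  refine ⟨∑ e ∈ p.support, monomial e ⟨Polynomial.monomial j (monomial e (coeff e p)),
    (reesAlgebra.monomial_mem).mpr (hmem e)⟩, ?_⟩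
  rw [phiC_apply, map_sum]
  refine Finset.sum_congr rfl fun e _ => ?_
  rw [map_monomial]
  rfl

lemma integral_monomial (J : Ideal (MvPolynomial (Fin n) k)) (hJ : ∀ i, MI (J ^ i))
    (r : MvPolynomial (Fin n) k) (m : ℕ) (hm : 0 < m) (a : ℕ → MvPolynomial (Fin n) k)
    (ha : ∀ i : ℕ, 1 ≤ i → i ≤ m → a i ∈ J ^ i)
    (h : r ^ m + ∑ i ∈ Finset.Icc 1 m, a i * r ^ (m - i) = 0)
    (e : Fin n →₀ ℕ) (he : e ∈ r.support) :
    ∃ s : ℕ, 1 ≤ s ∧ monomial (s • e) (1 : k) ∈ J ^ s := by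
  classical
  let _ := MvPolynomial.algebraMvPolynomial (σ := Fin n) (R := reesAlgebra J)
    (S := Polynomial (MvPolynomial (Fin n) k))
  have hb : ∀ i, ∃ b : MvPolynomial (Fin n) (reesAlgebra J), 1 ≤ i → i ≤ m →
      map (algebraMap (reesAlgebra J) (Polynomial (MvPolynomial (Fin n) k))) b =
        phiC k n (Polynomial.monomial i (a i)) := by
    intro i
    by_cases h1 : 1 ≤ i ∧ i ≤ m
    · obtain ⟨b, hb⟩ := phiC_lift J hJ i (a i) (ha i h1.1 h1.2)
      exact ⟨b, fun _ _ => hb⟩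
    · exact ⟨0, fun h2 h3 => absurd ⟨h2, h3⟩ h1⟩
  choose b hb using hb
  have hIntegral : IsIntegral (MvPolynomial (Fin n) (reesAlgebra J))
      (phiC k n (Polynomial.monomial 1 r)) := by
    refine ⟨Polynomial.X ^ m + ∑ i ∈ Finset.Icc 1 m, Polynomial.C (b i) * Polynomial.X ^ (m - i),
      ?_, ?_⟩
    · apply Polynomial.monic_X_pow_add
      refine lt_of_le_of_lt (Polynomial.degree_sum_le _ _) ?_
      rw [Finset.sup_lt_iff (by exact_mod_cast WithBot.bot_lt_coe m)]
      intro i hi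
      rw [Finset.mem_Icc] at hi
      refine lt_of_le_of_lt (Polynomial.degree_C_mul_X_pow_le _ _) ?_
      exact_mod_cast (by omega : m - i < m)
    · rw [Polynomial.eval₂_add, Polynomial.eval₂_X_pow, Polynomial.eval₂_finsetSum]
      simp only [Polynomial.eval₂_mul, Polynomial.eval₂_C, Polynomial.eval₂_X_pow]
      have h2 : phiC k n (Polynomial.monomial m
          (r ^ m + ∑ i ∈ Finset.Icc 1 m, a i * r ^ (m - i))) = 0 := by
        rw [h]; simp
      rw [← h2, map_add, map_sum, map_add, map_sum, ← map_pow,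
        Polynomial.monomial_pow, one_mul]
      congr 1
      refine Finset.sum_congr rfl fun i hi => ?_
      rw [Finset.mem_Icc] at hi
      have h3 : (algebraMap (MvPolynomial (Fin n) (reesAlgebra J))
        (MvPolynomial (Fin n) (Polynomial (MvPolynomial (Fin n) k)))) (b i) =
        phiC k n (Polynomial.monomial i (a i)) := hb i hi.1 hi.2
      rw [h3, ← map_pow, ← map_mul, Polynomial.monomial_pow, one_mul,
        Polynomial.monomial_mul_monomial, Nat.add_sub_cancel' hi.2]
  have hco := (MvPolynomial.isIntegral_iff_isIntegral_coeff.mp hIntegral) e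
  rw [phiC_apply, coeff_sum] at hco
  simp only [coeff_monomial, Finset.sum_ite_eq', he, if_true] at hco
  set c := coeff e r with hc
  have hc0 : c ≠ 0 := mem_support_iff.mp he
  obtain ⟨q, hq, hq0⟩ := hco
  set s := q.natDegree with hs
  rw [Polynomial.eval₂_eq_sum_range] at hq0
  have hq1 := congrArg (fun p => coeff (s • e) (Polynomial.coeff p s)) hq0
  simp only [Polynomial.finsetSum_coeff, coeff_sum, Polynomial.coeff_zero, coeff_zero] at hq1
  by_contra hcon
  push Not at hcon
  rw [Finset.sum_range_succ, Finset.sum_eq_zero, zero_add] at hq1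
  · rw [← hs, show q.coeff s = 1 from hq, map_one, one_mul, Polynomial.monomial_pow, one_mul,
      Polynomial.coeff_monomial, if_pos rfl, monomial_pow, coeff_monomial, if_pos rfl] at hq1
    exact pow_ne_zero _ hc0 hq1
  · intro l hl
    rw [Finset.mem_range] at hl
    by_contra hne
    refine hcon (s - l) (by omega) ?_
    rw [Polynomial.monomial_pow, one_mul] at hne
    rw [show s = (s - l) + l by omega, Polynomial.coeff_mul_monomial, monomial_pow,
      add_smul, coeff_mul_monomial] at hne
    have h5 := left_ne_zero_of_mul hne
    refine hJ (s - l) _ ?_ _ (mem_support_iff.mpr h5)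
    exact (q.coeff l).2 (s - l)

def ICset (J : Ideal (MvPolynomial (Fin n) k)) : Set (Fin n →₀ ℕ) :=
  {e | ∃ s : ℕ, 1 ≤ s ∧ monomial (s • e) (1 : k) ∈ J ^ s}

lemma intClos_eq (J : Ideal (MvPolynomial (Fin n) k)) (hJ : ∀ i, MI (J ^ i)) :
    intClos J = Ideal.span ((fun e => monomial e (1 : k)) '' ICset J) := by
  apply le_antisymm
  · unfold intClos
    rw [Ideal.span_le]
    rintro r ⟨m, hm, a, ha, h⟩
    refine mem_of_monomials fun e he => Ideal.subset_span ⟨e, ?_, rfl⟩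
    exact integral_monomial J hJ r m hm a ha h e he
  · rw [Ideal.span_le]
    rintro _ ⟨e, ⟨s, hs, hse⟩, rfl⟩
    refine Ideal.subset_span ⟨s, hs, fun i => if i = s then - monomial (s • e) 1 else 0, ?_, ?_⟩
    · intro i _ _
      by_cases hi : i = s
      · subst hi; simp only [if_true]; exact neg_mem hse
      · simp [hi]
    · rw [Finset.sum_eq_single_of_mem s (by simp [hs])]
      · simp [monomial_pow]
      · intro i _ hi; simp [hi]

lemma mem_intClos_iff (J : Ideal (MvPolynomial (Fin n) k)) (hJ : ∀ i, MI (J ^ i))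
    (e : Fin n →₀ ℕ) : monomial e (1 : k) ∈ intClos J ↔ e ∈ ICset J := by
  rw [intClos_eq J hJ, mem_ideal_span_monomial_image]
  constructor
  · intro h
    obtain ⟨e', ⟨s, hs, hse⟩, hle⟩ := h e (by simp [mem_support_iff])
    refine ⟨s, hs, MI.mono ?_ hse⟩
    gcongr
  · intro h e' he'
    have := support_monomial_subset he'
    simp only [Finset.mem_singleton] at this
    subst this
    exact ⟨_, h, le_rfl⟩

lemma MI_intClos (J : Ideal (MvPolynomial (Fin n) k)) (hJ : ∀ i, MI (J ^ i)) :
    MI (intClos J) := by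
  rw [intClos_eq J hJ]; exact MI_span _

lemma colon_pow {E : Set (Finset (Fin n))} {F : Finset (Fin n)} (hF : IsGoodLeaf E F)
    (t : ℕ) (e : Fin n →₀ ℕ) :
    monomial (e + indF F) (1 : k) ∈ edgeIdealH k E ^ (t + 1) ↔
      monomial e (1 : k) ∈ edgeIdealH k E ^ t := by
  rw [mem_edge_pow, mem_edge_pow]
  simpa using ES_colon_iff hF (t := t) (j := 1) (e := e)

lemma colon_intClos {E : Set (Finset (Fin n))} {F : Finset (Fin n)} (hF : IsGoodLeaf E F)
    (t : ℕ) (e : Fin n →₀ ℕ) :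
    monomial (e + indF F) (1 : k) ∈ intClos (edgeIdealH k E ^ (t + 1)) ↔
      monomial e (1 : k) ∈ intClos (edgeIdealH k E ^ t) := by
  have hMI : ∀ t i, MI ((edgeIdealH k E ^ t) ^ i) := by
    intro t i; rw [← pow_mul]; exact MI_edge_pow _ _
  rw [mem_intClos_iff _ (hMI _), mem_intClos_iff _ (hMI _)]
  unfold ICset
  simp only [Set.mem_ofPred_eq]
  refine exists_congr fun s => and_congr_right fun hs => ?_
  rw [← pow_mul, ← pow_mul, mem_edge_pow, mem_edge_pow, add_mul, one_mul, smul_add]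
  exact ES_colon_iff hF

end PartC

section PartB1
variable {k : Type*} [Field k] {n : ℕ}

local notation "RR" => MvPolynomial (Fin n) k

/-- homogeneous component of integer degree -/
noncomputable def hc (d : ℤ) (p : MvPolynomial (Fin n) k) : MvPolynomial (Fin n) k :=
  if 0 ≤ d then homogeneousComponent d.toNat p else 0

lemma coeff_hc (d : ℤ) (p : RR) (e : Fin n →₀ ℕ) :
    coeff e (hc d p) = if (e.degree : ℤ) = d then coeff e p else 0 := by
  unfold hc
  by_cases hd : 0 ≤ d
  · rw [if_pos hd, coeff_homogeneousComponent]
    congr 1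
    apply propext
    omega
  · rw [if_neg hd, coeff_zero, if_neg]
    omega

lemma hc_add (d : ℤ) (p q : RR) : hc d (p + q) = hc d p + hc d q := by
  ext e; simp only [coeff_hc, coeff_add]; split_ifs <;> simp

@[simp] lemma hc_zero (d : ℤ) : hc d (0 : RR) = 0 := by
  ext e; simp [coeff_hc]

lemma hc_sum {ι : Type*} (s : Finset ι) (d : ℤ) (f : ι → RR) :
    hc d (∑ i ∈ s, f i) = ∑ i ∈ s, hc d (f i) := by
  classical
  induction s using Finset.induction_on with
  | empty => simp
  | insert a s ha ih => rw [Finset.sum_insert ha, hc_add, ih, Finset.sum_insert ha]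

lemma hd_iff (p : RR) (d : ℤ) :
    HomogOfDeg p d ↔ ∀ e, coeff e p ≠ 0 → (e.degree : ℤ) = d := by
  constructor
  · rintro (rfl | ⟨m, rfl, h⟩) e he
    · simp at he
    · have h2 := h he
      rw [← h2, Finsupp.degree_eq_weight_one]; rfl
  · intro h
    by_cases hp : p = 0
    · exact Or.inl hp
    · obtain ⟨e, he⟩ := exists_coeff_ne_zero hp
      refine Or.inr ⟨e.degree, h e he, ?_⟩
      intro e' he'
      have := h e' he'
      rw [← h e he] at this
      have h3 : e'.degree = e.degree := by exact_mod_cast this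
      rw [← h3, Finsupp.degree_eq_weight_one]; rfl

lemma hd_hc (d : ℤ) (p : RR) : HomogOfDeg (hc d p) d := by
  rw [hd_iff]; intro e he
  rw [coeff_hc] at he
  by_contra h
  simp [h] at he

lemma hc_eq {p : RR} {d : ℤ} (h : HomogOfDeg p d) : hc d p = p := by
  rw [hd_iff] at h
  ext e
  rw [coeff_hc]
  split_ifs with h1
  · rfl
  · by_contra h2; exact h1 (h e (Ne.symm h2))

lemma hc_ne {p : RR} {d d' : ℤ} (h : HomogOfDeg p d) (hne : d' ≠ d) : hc d' p = 0 := by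
  rw [hd_iff] at h
  ext e
  rw [coeff_hc, coeff_zero]
  split_ifs with h1
  · by_contra h2; exact hne (h1.symm.trans (h e h2))
  · rfl

lemma hd_zero (d : ℤ) : HomogOfDeg (0 : RR) d := Or.inl rfl

lemma hd_one : HomogOfDeg (1 : RR) 0 := Or.inr ⟨0, rfl, isHomogeneous_one _ _⟩

lemma hd_X (i : Fin n) : HomogOfDeg (X i : RR) 1 := Or.inr ⟨1, rfl, isHomogeneous_X _ _⟩

lemma hd_add {p q : RR} {d : ℤ} (hp : HomogOfDeg p d) (hq : HomogOfDeg q d) :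
    HomogOfDeg (p + q) d := by
  rw [← hc_eq hp, ← hc_eq hq, ← hc_add]; exact hd_hc _ _

lemma hd_neg {p : RR} {d : ℤ} (hp : HomogOfDeg p d) : HomogOfDeg (-p) d := by
  rw [hd_iff] at hp ⊢
  intro e he; exact hp e (by simpa using he)

lemma hd_sub {p q : RR} {d : ℤ} (hp : HomogOfDeg p d) (hq : HomogOfDeg q d) :
    HomogOfDeg (p - q) d := by
  rw [sub_eq_add_neg]; exact hd_add hp (hd_neg hq)

lemma hd_sum {ι : Type*} (s : Finset ι) {d : ℤ} {f : ι → RR}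
    (h : ∀ i ∈ s, HomogOfDeg (f i) d) : HomogOfDeg (∑ i ∈ s, f i) d := by
  have : ∑ i ∈ s, f i = hc d (∑ i ∈ s, f i) := by
    rw [hc_sum]; exact Finset.sum_congr rfl fun i hi => (hc_eq (h i hi)).symm
  rw [this]; exact hd_hc _ _

lemma hd_mul' {p q : RR} {a b : ℤ} (hp : HomogOfDeg p a) (hq : HomogOfDeg q b) :
    HomogOfDeg (p * q) (a + b) := by
  rcases hp with rfl | ⟨m, rfl, hp⟩
  · simp [hd_zero]
  rcases hq with rfl | ⟨l, rfl, hq⟩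
  · simp [hd_zero]
  exact Or.inr ⟨m + l, by push_cast; rfl, hp.mul hq⟩

lemma hd_mul {p q : RR} {a b d : ℤ} (hp : HomogOfDeg p a) (hq : HomogOfDeg q b) (h : a + b = d) :
    HomogOfDeg (p * q) d := h ▸ hd_mul' hp hq

lemma hc_sum_eq (p : RR) (S : Finset ℤ) (hS : ∀ m : ℕ, m ≤ p.totalDegree → (m : ℤ) ∈ S) :
    ∑ c ∈ S, hc c p = p := by
  ext e
  rw [coeff_sum]
  simp only [coeff_hc, Finset.sum_ite_eq]
  split_ifs with h
  · rfl
  · by_contra h2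
    apply h
    apply hS
    have := le_totalDegree (mem_support_iff.mpr (Ne.symm h2))
    simpa [Finsupp.degree_apply, Finsupp.sum] using this

lemma hc_mul {p : RR} {a : ℤ} (hp : HomogOfDeg p a) (d : ℤ) (q : RR) :
    hc d (p * q) = p * hc (d - a) q := by
  classical
  set S := insert (d - a) ((Finset.range (q.totalDegree + 1)).map (Nat.castEmbedding (R := ℤ))) with hS
  have h1 : ∑ c ∈ S, hc c q = q := by
    apply hc_sum_eq
    intro m hm
    refine Finset.mem_insert_of_mem (Finset.mem_map.mpr ⟨m, ?_, rfl⟩)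
    simp; omega
  conv_lhs => rw [← h1, Finset.mul_sum, hc_sum]
  rw [Finset.sum_eq_single (d - a)]
  · exact hc_eq (hd_mul hp (hd_hc _ _) (by ring))
  · intro b _ hb
    apply hc_ne (hd_mul' hp (hd_hc b q))
    intro h; apply hb; omega
  · intro h; exact absurd (Finset.mem_insert_self _ _) h

lemma hc_mul_right {p : RR} {a : ℤ} (hp : HomogOfDeg p a) (d : ℤ) (q : RR) :
    hc d (q * p) = hc (d - a) q * p := by
  rw [mul_comm, hc_mul hp, mul_comm]

lemma MI.hc_mem {J : Ideal RR} (hJ : MI J) {p : RR} (hp : p ∈ J) (d : ℤ) : hc d p ∈ J := by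
  rw [hJ.mem_iff] at hp ⊢
  intro e he
  apply hp
  rw [mem_support_iff, coeff_hc] at he
  rw [mem_support_iff]
  intro h; simp [h] at he

lemma hd_neg_eq_zero {p : RR} {d : ℤ} (h : HomogOfDeg p d) (hd : d < 0) : p = 0 := by
  rcases h with h | ⟨m, hm, _⟩
  · exact h
  · omega

lemma hd_zero_deg {p : RR} (h : HomogOfDeg p 0) : p = C (coeff 0 p) := by
  ext e
  rw [coeff_C]
  split_ifs with h1
  · rw [h1]
  · by_contra h2
    have := (hd_iff p 0).mp h e h2
    apply h1
    have h3 : e.degree = 0 := by exact_mod_cast this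
    exact ((Finsupp.degree_eq_zero_iff e).mp h3).symm

end PartB1

section PartB2
universe u
variable {k : Type u} [Field k] {n : ℕ}

local notation "RR" => MvPolynomial (Fin n) k

def VH {ι : Type} (d : ι → ℤ) (c : ℤ) (v : ι → MvPolynomial (Fin n) k) : Prop :=
  ∀ i, HomogOfDeg (v i) (c - d i)

noncomputable def vc {ι : Type} (d : ι → ℤ) (c : ℤ) (v : ι → MvPolynomial (Fin n) k) :
    ι → MvPolynomial (Fin n) k := fun i => hc (c - d i) (v i)

lemma VH_vc {ι : Type} (d : ι → ℤ) (c : ℤ) (v : ι → RR) : VH d c (vc d c v) :=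
  fun _ => hd_hc _ _

lemma vc_eq {ι : Type} {d : ι → ℤ} {c : ℤ} {v : ι → RR} (h : VH d c v) : vc d c v = v :=
  funext fun i => hc_eq (h i)

lemma vc_add {ι : Type} (d : ι → ℤ) (c : ℤ) (v w : ι → RR) :
    vc d c (v + w) = vc d c v + vc d c w := funext fun _ => hc_add _ _ _

lemma vc_zero {ι : Type} (d : ι → ℤ) (c : ℤ) : vc d c (0 : ι → RR) = 0 :=
  funext fun _ => hc_zero _

lemma vc_smul {ι : Type} (d : ι → ℤ) (c : ℤ) {a : ℤ} {p : RR} (hp : HomogOfDeg p a) (v : ι → RR) :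
    vc d c (p • v) = p • vc d (c - a) v := by
  funext i
  simp only [vc, Pi.smul_apply, smul_eq_mul]
  rw [hc_mul hp]
  congr 2; ring

lemma vc_comb {ι κ : Type} [Fintype κ] {d : ι → ℤ} {c : κ → ℤ} {u : κ → ι → RR}
    (h : ∀ j, VH d (c j) (u j)) (e : ℤ) (w : κ → RR) :
    vc d e (∑ j, w j • u j) = ∑ j, hc (e - c j) (w j) • u j := by
  funext i
  simp only [vc, Finset.sum_apply, Pi.smul_apply, smul_eq_mul]
  rw [hc_sum]
  refine Finset.sum_congr rfl fun j _ => ?_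
  rw [hc_mul_right (h j i)]
  congr 2; ring

lemma VH_comb {ι κ : Type} [Fintype κ] {d : ι → ℤ} {c : κ → ℤ} {u : κ → ι → RR}
    (h : ∀ j, VH d (c j) (u j)) (e : ℤ) (w : κ → RR) (hw : ∀ j, HomogOfDeg (w j) (e - c j)) :
    VH d e (∑ j, w j • u j) := by
  have : ∑ j, w j • u j = vc d e (∑ j, w j • u j) := by
    rw [vc_comb h]; exact Finset.sum_congr rfl fun j _ => by rw [hc_eq (hw j)]
  rw [this]; exact VH_vc _ _ _

def HS {ι : Type} (d : ι → ℤ) (N : Submodule (MvPolynomial (Fin n) k)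
    (ι → MvPolynomial (Fin n) k)) : Prop := ∀ v ∈ N, ∀ c, vc d c v ∈ N

noncomputable def Syz (k : Type u) [Field k] (n : ℕ) {κ : Type} [Fintype κ] {M : Type*} [AddCommGroup M]
    [Module (MvPolynomial (Fin n) k) M] (u : κ → M) :
    Submodule (MvPolynomial (Fin n) k) (κ → MvPolynomial (Fin n) k) :=
  LinearMap.ker (Fintype.linearCombination (MvPolynomial (Fin n) k) u)

lemma mem_Syz {κ : Type} [Fintype κ] {M : Type*} [AddCommGroup M] [Module RR M] {u : κ → M}
    {w : κ → RR} : w ∈ Syz k n u ↔ ∑ j, w j • u j = 0 := by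
  rw [Syz, LinearMap.mem_ker, Fintype.linearCombination_apply]

lemma mem_span_u {κ : Type} [Fintype κ] {M : Type*} [AddCommGroup M] [Module RR M] {u : κ → M}
    {x : M} : x ∈ Submodule.span RR (Set.range u) ↔ ∃ w : κ → RR, ∑ j, w j • u j = x := by
  rw [Submodule.mem_span_range_iff_exists_fun]

lemma HS_Syz {ι κ : Type} [Fintype κ] {d : ι → ℤ} {c : κ → ℤ} {u : κ → ι → RR}
    (h : ∀ j, VH d (c j) (u j)) : HS c (Syz k n u) := by
  intro w hw e
  rw [mem_Syz] at hw ⊢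
  have := vc_comb h e w
  rw [hw, vc_zero] at this
  exact this.symm

lemma HS_span {ι κ : Type} [Fintype κ] {d : ι → ℤ} {c : κ → ℤ} {u : κ → ι → RR}
    (h : ∀ j, VH d (c j) (u j)) : HS d (Submodule.span RR (Set.range u)) := by
  intro v hv e
  rw [mem_span_u] at hv ⊢
  obtain ⟨w, rfl⟩ := hv
  exact ⟨_, (vc_comb h e w).symm⟩

/-- homogeneous coefficients -/
lemma exists_homog_comb {ι κ : Type} [Fintype κ] {d : ι → ℤ} {c : κ → ℤ} {u : κ → ι → RR}
    (h : ∀ j, VH d (c j) (u j)) {e : ℤ} {v : ι → RR} (hv : VH d e v)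
    (hmem : v ∈ Submodule.span RR (Set.range u)) :
    ∃ w : κ → RR, (∀ j, HomogOfDeg (w j) (e - c j)) ∧ ∑ j, w j • u j = v := by
  rw [mem_span_u] at hmem
  obtain ⟨w, hw⟩ := hmem
  refine ⟨fun j => hc (e - c j) (w j), fun j => hd_hc _ _, ?_⟩
  rw [← vc_comb h, hw, vc_eq hv]

/-- linear resolution-type property -/
def PP (k : Type u) [Field k] (n : ℕ) : ℕ → ∀ (ι : Type), ℤ → (ι → ℤ) →
    Submodule (MvPolynomial (Fin n) k) (ι → MvPolynomial (Fin n) k) → Prop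
  | 0, _, _, _, _ => True
  | l + 1, ι, r, d, N => ∃ (κ : Type) (_ : Fintype κ) (c : κ → ℤ)
      (u : κ → ι → MvPolynomial (Fin n) k), (∀ j, VH d (c j) (u j)) ∧
      Submodule.span (MvPolynomial (Fin n) k) (Set.range u) = N ∧ (∀ j, c j ≤ r) ∧
      PP k n l κ (r + 1) c (Syz k n u)

lemma PP_mono (l : ℕ) : ∀ {ι : Type} {r r' : ℤ} {d : ι → ℤ} {N : Submodule RR (ι → RR)},
    r ≤ r' → PP k n l ι r d N → PP k n l ι r' d N := by
  induction l with
  | zero => intros; trivial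
  | succ l ih =>
    rintro ι r r' d N hr ⟨κ, _, c, u, h1, h2, h3, h4⟩
    exact ⟨κ, _, c, u, h1, h2, fun j => (h3 j).trans hr, ih (by omega) h4⟩

/-- transfer along a graded map injective on `N` -/
lemma PP_map {l : ℕ} {ι ι' : Type} {r : ℤ} {d : ι → ℤ} {d' : ι' → ℤ}
    {N : Submodule RR (ι → RR)} (φ : (ι → RR) →ₗ[RR] (ι' → RR))
    (hφ : ∀ c v, VH d c v → VH d' c (φ v)) (hinj : ∀ v ∈ N, φ v = 0 → v = 0)
    (h : PP k n l ι r d N) : PP k n l ι' r d' (N.map φ) := by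
  cases l with
  | zero => trivial
  | succ l =>
    obtain ⟨κ, _, c, u, h1, h2, h3, h4⟩ := h
    refine ⟨κ, inferInstance, c, fun j => φ (u j), fun j => hφ _ _ (h1 j), ?_, h3, ?_⟩
    · rw [← h2, Submodule.map_span, ← Set.range_comp]; rfl
    · have : Syz k n (fun j => φ (u j)) = Syz k n u := by
        ext w
        rw [mem_Syz, mem_Syz]
        simp only [← map_smul, ← map_sum]
        constructor
        · intro h
          refine hinj _ ?_ h
          rw [← h2, mem_span_u]; exact ⟨w, rfl⟩
        · intro h; rw [h, map_zero]
      rw [this]; exact h4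

/-- extension by zero -/
noncomputable def extZ (R : Type*) [CommRing R] (κ κ' : Type) : (κ → R) →ₗ[R] (κ ⊕ κ' → R) where
  toFun w := Sum.elim w 0
  map_add' a b := by funext i; cases i <;> simp
  map_smul' a b := by funext i; cases i <;> simp

lemma extZ_VH {κ κ' : Type} {c : κ → ℤ} {c' : κ' → ℤ} {e : ℤ} {w : κ → RR} (h : VH c e w) :
    VH (Sum.elim c c') e (extZ RR κ κ' w) := by
  rintro (i | i)
  · exact h i
  · exact hd_zero _

lemma extZ_inj {R : Type*} [CommRing R] {κ κ' : Type} {w : κ → R} (h : extZ R κ κ' w = 0) : w = 0 :=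
  funext fun i => congrFun h (Sum.inl i)

lemma PP_extend {l : ℕ} {ι κ' : Type} [Fintype κ'] {s : ℤ} {d : ι → ℤ} {c' : κ' → ℤ}
    {N N' : Submodule RR (ι → RR)} (y : κ' → ι → RR) (hy : ∀ j, VH d (c' j) (y j))
    (hs : ∀ j, c' j ≤ s) (hN' : N' = N ⊔ Submodule.span RR (Set.range y))
    (hind : ∀ f : κ' → RR, ∑ j, f j • y j ∈ N → f = 0)
    (h : PP k n l ι s d N) : PP k n l ι s d N' := by
  cases l with
  | zero => trivial
  | succ l =>
    obtain ⟨κ, _, c, u, h1, h2, h3, h4⟩ := h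
    refine ⟨κ ⊕ κ', inferInstance, Sum.elim c c', Sum.elim u y, ?_, ?_, ?_, ?_⟩
    · rintro (j | j)
      · exact h1 j
      · exact hy j
    · rw [hN', ← h2, Set.Sum.elim_range, Submodule.span_union]
    · rintro (j | j)
      · exact h3 j
      · exact hs j
    · have : Syz k n (Sum.elim u y) = (Syz k n u).map (extZ RR κ κ') := by
        ext w
        rw [Submodule.mem_map, mem_Syz, Fintype.sum_sum_type]
        simp only [Sum.elim_inl, Sum.elim_inr]
        constructor
        · intro h
          have h5 : (fun j => w (Sum.inr j)) = 0 := by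
            apply hind
            rw [← h2, eq_neg_of_add_eq_zero_right h]
            exact Submodule.neg_mem _ (mem_span_u.mpr ⟨fun j => w (Sum.inl j), rfl⟩)
          refine ⟨fun j => w (Sum.inl j), ?_, ?_⟩
          · rw [mem_Syz]
            have h6 : ∀ j, w (Sum.inr j) = 0 := fun j => congrFun h5 j
            simpa [h6] using h
          · funext i
            rcases i with i | i
            · rfl
            · exact (congrFun h5 i).symm
        · rintro ⟨w, hw, rfl⟩
          rw [mem_Syz] at hw
          simp [extZ, hw]
      rw [this]
      exact PP_map _ (fun c v => extZ_VH) (fun v _ => extZ_inj) h4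

section Schanuel
variable {κ κ' : Type} [Fintype κ] [Fintype κ'] {M : Type*} [AddCommGroup M] [Module (MvPolynomial (Fin n) k) M]
  {u : κ → M} {u' : κ' → M} {a : κ' → κ → MvPolynomial (Fin n) k} {c : κ → ℤ} {c' : κ' → ℤ} {s : ℤ}

open Classical in
noncomputable def yv {κ κ' : Type} (a : κ' → κ → MvPolynomial (Fin n) k) (j : κ') :
    κ ⊕ κ' → MvPolynomial (Fin n) k := Sum.elim (fun i => - a j i) (Pi.single j 1)

lemma yv_VH (hda : ∀ j i, HomogOfDeg (a j i) (c' j - c i)) (j : κ') :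
    VH (Sum.elim c c') (c' j) (yv a j) := by
  classical
  rintro (i | i)
  · exact hd_neg (hda j i)
  · simp only [yv, Sum.elim_inr, Pi.single_apply]
    split_ifs with h
    · subst h; rw [sub_self]; exact hd_one
    · exact hd_zero _

lemma yv_inr (f : κ' → RR) (i : κ') : (∑ j, f j • yv a j) (Sum.inr i) = f i := by
  classical
  simp [yv, Finset.sum_apply, Pi.single_apply]

lemma yv_inl (f : κ' → RR) (i : κ) :
    (∑ j, f j • yv a j) (Sum.inl i) = - ∑ j, f j * a j i := by
  simp [yv, Finset.sum_apply]

lemma sum_swap (ha : ∀ j, u' j = ∑ i, a j i • u i) (f : κ' → RR) :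
    ∑ j, f j • u' j = ∑ i, (∑ j, f j * a j i) • u i := by
  simp only [ha, Finset.smul_sum, Finset.sum_smul, smul_smul]
  exact Finset.sum_comm

lemma yv_Syz (ha : ∀ j, u' j = ∑ i, a j i • u i) (f : κ' → RR) :
    ∑ j, f j • yv a j ∈ Syz k n (Sum.elim u u') := by
  rw [mem_Syz, Fintype.sum_sum_type]
  simp only [Sum.elim_inl, Sum.elim_inr, yv_inl, yv_inr]
  rw [sum_swap ha f, ← Finset.sum_add_distrib]
  simp

lemma PP_add (l : ℕ) (ha : ∀ j, u' j = ∑ i, a j i • u i)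
    (hda : ∀ j i, HomogOfDeg (a j i) (c' j - c i)) (hs : ∀ j, c' j ≤ s)
    (h : PP k n l κ s c (Syz k n u)) : PP k n l (κ ⊕ κ') s (Sum.elim c c') (Syz k n (Sum.elim u u')) := by
  have h1 : PP k n l (κ ⊕ κ') s (Sum.elim c c') ((Syz k n u).map (extZ RR κ κ')) :=
    PP_map _ (fun c v => extZ_VH) (fun v _ => extZ_inj) h
  refine PP_extend (yv a) (yv_VH hda) hs ?_ ?_ h1
  · apply le_antisymm
    · intro w hw
      rw [mem_Syz, Fintype.sum_sum_type] at hw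
      simp only [Sum.elim_inl, Sum.elim_inr] at hw
      rw [Submodule.mem_sup]
      refine ⟨w - ∑ j, w (Sum.inr j) • yv a j, ?_, ∑ j, w (Sum.inr j) • yv a j,
        mem_span_u.mpr ⟨_, rfl⟩, by simp⟩
      refine ⟨fun i => w (Sum.inl i) + ∑ j, w (Sum.inr j) * a j i, ?_, ?_⟩
      · show _ ∈ Syz k n u
        rw [mem_Syz, ← hw, sum_swap ha, ← Finset.sum_add_distrib]
        simp only [add_smul]
      · funext i
        rcases i with i | i
        · rw [Pi.sub_apply, yv_inl]; simp [extZ]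
        · rw [Pi.sub_apply, yv_inr]; simp [extZ]
    · refine sup_le ?_ ?_
      · rintro _ ⟨w, hw, rfl⟩
        have hw' : w ∈ Syz k n u := hw
        rw [mem_Syz] at hw' ⊢
        simp [Fintype.sum_sum_type, extZ, hw']
      · intro x hx
        obtain ⟨f, rfl⟩ := mem_span_u.mp hx
        exact yv_Syz ha f
  · rintro f ⟨w, hw, hwf⟩
    funext i
    rw [← yv_inr (a := a) f i, ← hwf]; rfl

/-- the projection sending a pair (w, z) to w + z a -/
noncomputable def prA (a : κ' → κ → MvPolynomial (Fin n) k) :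
    (κ ⊕ κ' → MvPolynomial (Fin n) k) →ₗ[MvPolynomial (Fin n) k]
      (κ → MvPolynomial (Fin n) k) where
  toFun x := fun i => x (Sum.inl i) + ∑ j, x (Sum.inr j) * a j i
  map_add' x y := by
    funext i
    simp only [Pi.add_apply, add_mul, Finset.sum_add_distrib]; ring
  map_smul' t y := by
    funext i
    simp [mul_add, Finset.mul_sum, mul_assoc]

lemma PP_remove (l : ℕ) (ha : ∀ j, u' j = ∑ i, a j i • u i)
    (hda : ∀ j i, HomogOfDeg (a j i) (c' j - c i)) (hs : ∀ j, c' j ≤ s)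
    (h : PP k n l (κ ⊕ κ') s (Sum.elim c c') (Syz k n (Sum.elim u u'))) :
    PP k n l κ s c (Syz k n u) := by
  cases l with
  | zero => trivial
  | succ l =>
    obtain ⟨κ₂, _, c₂, z, h1, h2, h3, h4⟩ := h
    have hy : ∀ j, ∃ w : κ₂ → RR, (∀ i, HomogOfDeg (w i) (c' j - c₂ i)) ∧
        ∑ i, w i • z i = yv a j := by
      intro j
      classical
      refine exists_homog_comb h1 (yv_VH hda j) ?_
      rw [h2]
      have := yv_Syz ha (Pi.single j 1)
      simpa [Pi.single_apply] using this
    choose yt hyt1 hyt2 using hy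
    have hyt3 : ∀ f : κ' → RR, ∑ i, (∑ j, f j • yt j) i • z i = ∑ j, f j • yv a j := by
      intro f
      simp only [← hyt2, Finset.sum_apply, Pi.smul_apply, Finset.sum_smul, Finset.smul_sum,
        smul_smul, smul_eq_mul]
      exact Finset.sum_comm
    have hker : ∀ x, prA a x = 0 → x = ∑ j, x (Sum.inr j) • yv a j := by
      intro x hx
      funext i
      rcases i with i | i
      · rw [yv_inl]
        have : x (Sum.inl i) + ∑ j, x (Sum.inr j) * a j i = 0 := congrFun hx i
        exact eq_neg_of_add_eq_zero_left this
      · rw [yv_inr]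
    have hker2 : ∀ f : κ' → RR, prA a (∑ j, f j • yv a j) = 0 := by
      intro f
      funext i
      show (∑ j, f j • yv a j) (Sum.inl i) + ∑ j, (∑ j, f j • yv a j) (Sum.inr j) * a j i = 0
      simp only [yv_inl, yv_inr]; simp
    refine ⟨κ₂, inferInstance, c₂, fun i => prA a (z i), ?_, ?_, h3, ?_⟩
    · intro j i
      refine hd_add (h1 j (Sum.inl i)) (hd_sum _ fun i' _ => ?_)
      refine hd_mul (h1 j (Sum.inr i')) (hda i' i) ?_
      simp
    · have : Set.range (fun i => prA a (z i)) = prA a '' Set.range z := by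
        rw [← Set.range_comp]; rfl
      rw [this, ← Submodule.map_span, h2]
      apply le_antisymm
      · rintro _ ⟨x, hx, rfl⟩
        have hx' : x ∈ Syz k n (Sum.elim u u') := hx
        rw [mem_Syz, Fintype.sum_sum_type] at hx'
        simp only [Sum.elim_inl, Sum.elim_inr] at hx'
        rw [mem_Syz, ← hx', sum_swap ha, ← Finset.sum_add_distrib]
        simp only [← add_smul]
        rfl
      · intro w hw
        refine ⟨extZ RR κ κ' w, ?_, ?_⟩
        · show _ ∈ Syz k n _
          rw [mem_Syz] at hw ⊢
          simp [Fintype.sum_sum_type, extZ, hw]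
        · funext i
          simp [prA, extZ]
    · refine PP_extend (s := s + 1) yt hyt1 (fun j => (hs j).trans (by omega)) ?_ ?_ h4
      · apply le_antisymm
        · intro q hq
          rw [mem_Syz] at hq
          simp only [← map_smul, ← map_sum] at hq
          have h5 := hker _ hq
          set x := ∑ i, q i • z i with hx
          rw [Submodule.mem_sup]
          refine ⟨q - ∑ j, x (Sum.inr j) • yt j, ?_, ∑ j, x (Sum.inr j) • yt j,
            mem_span_u.mpr ⟨_, rfl⟩, by simp⟩
          rw [mem_Syz]
          simp only [Pi.sub_apply, sub_smul, Finset.sum_sub_distrib]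
          rw [hyt3, ← h5, ← hx, sub_self]
        · refine sup_le ?_ ?_
          · intro q hq
            rw [mem_Syz] at hq ⊢
            simp only [← map_smul, ← map_sum]
            rw [hq, map_zero]
          · intro q hq
            obtain ⟨f, rfl⟩ := mem_span_u.mp hq
            rw [mem_Syz]
            simp only [← map_smul, ← map_sum]
            rw [hyt3, hker2]
      · intro f hf
        rw [mem_Syz, hyt3] at hf
        funext i
        rw [← yv_inr (a := a) f i, hf]; rfl

lemma PP_swap (l : ℕ) (h : PP k n l (κ ⊕ κ') s (Sum.elim c c') (Syz k n (Sum.elim u u'))) :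
    PP k n l (κ' ⊕ κ) s (Sum.elim c' c) (Syz k n (Sum.elim u' u)) := by
  have h1 := PP_map (d' := Sum.elim c' c) (LinearMap.funLeft RR RR (Sum.swap : κ' ⊕ κ → κ ⊕ κ'))
    (fun e v hv => by
      rintro (i | i)
      · exact hv (Sum.inr i)
      · exact hv (Sum.inl i))
    (fun v _ hv => by
      funext i
      rcases i with i | i
      · exact congrFun hv (Sum.inr i)
      · exact congrFun hv (Sum.inl i)) h
  convert h1 using 1
  ext w
  rw [Submodule.mem_map]
  constructor
  · intro hw
    refine ⟨fun i => w i.swap, ?_, ?_⟩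
    · rw [mem_Syz, Fintype.sum_sum_type] at hw ⊢
      rw [add_comm]; exact hw
    · funext i; rcases i with i | i <;> rfl
  · rintro ⟨v, hv, rfl⟩
    rw [mem_Syz, Fintype.sum_sum_type] at hv ⊢
    rw [add_comm]; exact hv

theorem PP_schanuel (l : ℕ) {b : κ → κ' → RR} (ha : ∀ j, u' j = ∑ i, a j i • u i)
    (hda : ∀ j i, HomogOfDeg (a j i) (c' j - c i)) (hs' : ∀ j, c' j ≤ s)
    (hb : ∀ j, u j = ∑ i, b j i • u' i)
    (hdb : ∀ j i, HomogOfDeg (b j i) (c j - c' i)) (hs : ∀ j, c j ≤ s)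
    (h : PP k n l κ s c (Syz k n u)) : PP k n l κ' s c' (Syz k n u') :=
  PP_remove l hb hdb hs (PP_swap l (PP_add l ha hda hs' h))

end Schanuel
end PartB2

section PartB3
universe u
variable {k : Type u} [Field k] {n : ℕ}

local notation "RR" => MvPolynomial (Fin n) k

lemma exists_vc_sum {ι : Type} [Fintype ι] (d : ι → ℤ) (v : ι → RR) :
    ∃ S : Finset ℤ, ∑ c ∈ S, vc d c v = v := by
  classical
  refine ⟨Finset.univ.biUnion (fun i => (Finset.range ((v i).totalDegree + 1)).image
    (fun m : ℕ => (m : ℤ) + d i)), ?_⟩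
  set S := Finset.univ.biUnion (fun i => (Finset.range ((v i).totalDegree + 1)).image
    (fun m : ℕ => (m : ℤ) + d i)) with hS
  funext i
  rw [Finset.sum_apply]
  have h1 : ∑ c ∈ S, vc d c v i = ∑ c ∈ S.image (fun c => c - d i), hc c (v i) := by
    rw [Finset.sum_image]
    · rfl
    · intro a _ b _ h
      have : a - d i = b - d i := h
      omega
  rw [h1]
  apply hc_sum_eq
  intro m hm
  rw [Finset.mem_image]
  refine ⟨m + d i, ?_, by ring⟩
  rw [hS, Finset.mem_biUnion]
  refine ⟨i, Finset.mem_univ _, ?_⟩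
  rw [Finset.mem_image]
  exact ⟨m, by simp; omega, rfl⟩

lemma HS.le_of {ι : Type} [Fintype ι] {d : ι → ℤ} {N N' : Submodule RR (ι → RR)} (hN : HS d N)
    (h : ∀ c v, v ∈ N → VH d c v → v ∈ N') : N ≤ N' := by
  intro v hv
  obtain ⟨S, hS⟩ := exists_vc_sum d v
  rw [← hS]
  exact N'.sum_mem fun c _ => h c _ (hN v hv c) (VH_vc _ _ _)

lemma VH_eq_zero {ι : Type} {d : ι → ℤ} {c : ℤ} {v : ι → RR} (h : VH d c v)
    (hd : ∀ i, c < d i) : v = 0 :=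
  funext fun i => hd_neg_eq_zero (h i) (by have := hd i; omega)

/-- graded Nakayama -/
lemma graded_nak {ι : Type} [Fintype ι] {d : ι → ℤ} {L L' : Submodule RR (ι → RR)} (hL : HS d L)
    (x : RR) (h : ∀ c v, v ∈ L → VH d c v →
      ∃ a ∈ L', ∃ b ∈ L, VH d (c - 1) b ∧ v = a + x • b) : L ≤ L' := by
  obtain ⟨m, hm⟩ : ∃ m : ℤ, ∀ i, m ≤ d i := by
    obtain ⟨m, hm⟩ := (Set.finite_range d).bddBelow
    exact ⟨m, fun i => hm ⟨i, rfl⟩⟩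
  have key : ∀ (N : ℕ) (c : ℤ), c < m + N → ∀ v, v ∈ L → VH d c v → v ∈ L' := by
    intro N
    induction N with
    | zero =>
      intro c hc v hv hv2
      rw [VH_eq_zero hv2 (fun i => by have := hm i; push_cast at hc; omega)]
      exact L'.zero_mem
    | succ N ih =>
      intro c hc v hv hv2
      obtain ⟨a, ha, b, hb, hb2, rfl⟩ := h c v hv hv2
      refine L'.add_mem ha (L'.smul_mem x (ih (c - 1) ?_ b hb hb2))
      push_cast at hc; omega
  refine hL.le_of fun c v hv hv2 => key (c - m + 1).toNat c ?_ v hv hv2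
  omega

/-- `diag(1,x)` -/
noncomputable def diagX (x : MvPolynomial (Fin n) k) (κ : Type) :
    (κ ⊕ κ → MvPolynomial (Fin n) k) →ₗ[MvPolynomial (Fin n) k]
      (κ ⊕ κ → MvPolynomial (Fin n) k) where
  toFun w := Sum.elim (fun i => w (Sum.inl i)) (fun i => x * w (Sum.inr i))
  map_add' a b := by funext i; rcases i with i | i <;> simp [mul_add]
  map_smul' a b := by funext i; rcases i with i | i <;> simp [mul_left_comm]

theorem PP_reduce (x : RR) (hx : HomogOfDeg x 1) (hx0 : x ≠ 0) (l : ℕ) :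
    ∀ {ι : Type} [Fintype ι] {r : ℤ} {d : ι → ℤ} {L E : Submodule RR (ι → RR)},
    HS d L → HS d E → L ≤ E → (∀ v, x • v ∈ L → v ∈ L) →
    PP k n l ι r d (L ⊔ E.map (LinearMap.lsmul RR (ι → RR) x)) → PP k n l ι r d E := by
  induction l with
  | zero => intros; trivial
  | succ l ih =>
    intro ι _ r d L E hL hE hLE hreg hP
    obtain ⟨κ, _, c, u, h1, h2, h3, h4⟩ := hP
    have hdec : ∀ j, ∃ a ∈ L, ∃ b ∈ E, VH d (c j) a ∧ VH d (c j - 1) b ∧ u j = a + x • b := by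
      intro j
      have hu : u j ∈ L ⊔ E.map (LinearMap.lsmul RR (ι → RR) x) := by
        rw [← h2]; exact Submodule.subset_span ⟨j, rfl⟩
      obtain ⟨a, ha, b', ⟨b, hb, rfl⟩, hab⟩ := Submodule.mem_sup.mp hu
      refine ⟨vc d (c j) a, hL _ ha _, vc d (c j - 1) b, hE _ hb _, VH_vc _ _ _, VH_vc _ _ _, ?_⟩
      rw [← vc_smul d (c j) hx, ← vc_add]
      have : a + x • b = u j := hab
      rw [this, vc_eq (h1 j)]
    choose a haL e heE haV heV hu using hdec
    have hsplit : ∀ w : κ → RR, ∑ j, w j • u j = ∑ j, w j • a j + x • ∑ j, w j • e j := by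
      intro w
      rw [Finset.smul_sum, ← Finset.sum_add_distrib]
      refine Finset.sum_congr rfl fun j _ => ?_
      rw [hu, smul_add, smul_comm]
    have hLa' : Submodule.span RR (Set.range a) ≤ L := by
      rw [Submodule.span_le]; rintro _ ⟨j, rfl⟩; exact haL j
    have hLa : Submodule.span RR (Set.range a) = L := by
      apply le_antisymm hLa'
      refine graded_nak hL x ?_
      intro c' v hv hvV
      have hv2 : v ∈ Submodule.span RR (Set.range u) := by
        rw [h2]; exact Submodule.mem_sup_left hv
      obtain ⟨w, hw, hwv⟩ := exists_homog_comb h1 hvV hv2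
      have hmem : ∑ j, w j • a j ∈ Submodule.span RR (Set.range a) := mem_span_u.mpr ⟨w, rfl⟩
      refine ⟨∑ j, w j • a j, hmem, ∑ j, w j • e j, ?_, ?_, ?_⟩
      · apply hreg
        have : x • ∑ j, w j • e j = v - ∑ j, w j • a j := by
          rw [← hwv, hsplit]; simp
        rw [this]
        exact L.sub_mem hv (hLa' hmem)
      · refine VH_comb heV _ _ fun j => ?_
        have := hw j
        rwa [show c' - 1 - (c j - 1) = c' - c j by ring]
      · rw [← hwv, hsplit]
    -- the cover of `E`
    have hEcov : Submodule.span RR (Set.range (Sum.elim a e)) = E := by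
      rw [Set.Sum.elim_range, Submodule.span_union, hLa]
      apply le_antisymm
      · refine sup_le hLE ?_
        rw [Submodule.span_le]; rintro _ ⟨j, rfl⟩; exact heE j
      · intro v hv
        have hv2 : x • v ∈ Submodule.span RR (Set.range u) := by
          rw [h2]; exact Submodule.mem_sup_right ⟨v, hv, rfl⟩
        obtain ⟨w, hw⟩ := mem_span_u.mp hv2
        rw [Submodule.mem_sup]
        refine ⟨v - ∑ j, w j • e j, ?_, ∑ j, w j • e j, mem_span_u.mpr ⟨w, rfl⟩, by simp⟩
        apply hreg
        rw [smul_sub, ← hw, hsplit]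
        have : ∑ j, w j • a j ∈ L := L.sum_mem fun j _ => L.smul_mem _ (haL j)
        simpa using this
    refine ⟨κ ⊕ κ, inferInstance, Sum.elim c (fun j => c j - 1), Sum.elim a e, ?_, hEcov, ?_, ?_⟩
    · rintro (j | j)
      · exact haV j
      · exact heV j
    · rintro (j | j)
      · exact h3 j
      · have := h3 j
        simp only [Sum.elim_inr]; omega
    -- the syzygies
    have hxe : ∀ j, VH d (c j) (x • e j) := by
      intro j i
      exact hd_mul hx (heV j i) (by ring)
    have hcov2 : ∀ j, VH d (Sum.elim c c j) (Sum.elim a (fun j => x • e j) j) := by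
      rintro (j | j)
      · exact haV j
      · exact hxe j
    have hAB : ∀ j, ∃ w : κ → RR, (∀ i, HomogOfDeg (w i) (Sum.elim c c j - c i)) ∧
        ∑ i, w i • u i = Sum.elim a (fun j => x • e j) j := by
      intro j
      refine exists_homog_comb h1 (hcov2 j) ?_
      rw [h2]
      rcases j with j | j
      · exact Submodule.mem_sup_left (haL j)
      · exact Submodule.mem_sup_right ⟨e j, heE j, rfl⟩
    choose A hA1 hA2 using hAB
    classical
    have hS : PP k n l (κ ⊕ κ) (r + 1) (Sum.elim c c)
        (Syz k n (Sum.elim a (fun j => x • e j))) := by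
      refine PP_schanuel (c := c) (c' := Sum.elim c c) l (a := A)
        (b := fun j => Sum.elim (Pi.single j 1) (Pi.single j 1))
        (fun j => (hA2 j).symm) hA1 ?_ ?_ ?_ ?_ h4
      · rintro (j | j)
        · exact (h3 j).trans (by omega)
        · exact (h3 j).trans (by omega)
      · intro j
        rw [Fintype.sum_sum_type]
        simp [Pi.single_apply, hu]
      · intro j i
        rcases i with i | i
        all_goals
          simp only [Sum.elim_inl, Sum.elim_inr, Pi.single_apply]
          split_ifs with h
          · subst h; rw [sub_self]; exact hd_one
          · exact hd_zero _
      · exact fun j => (h3 j).trans (by omega)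
    have hS2 := PP_map (d' := Sum.elim c (fun j => c j - 1)) (diagX x κ) (fun c' v hv => by
        rintro (i | i)
        · exact hv (Sum.inl i)
        · exact hd_mul hx (hv (Sum.inr i)) (by simp; ring)) (fun v _ hv => by
        funext i
        rcases i with i | i
        · exact congrFun hv (Sum.inl i)
        · have : x * v (Sum.inr i) = 0 := congrFun hv (Sum.inr i)
          exact (mul_eq_zero.mp this).resolve_left hx0) hS
    refine ih (L := (Syz k n a).map (extZ RR κ κ)) ?_ ?_ ?_ ?_ ?_
    · rintro _ ⟨w, hw, rfl⟩ c'
      refine ⟨vc c c' w, HS_Syz haV w hw c', ?_⟩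
      funext i
      rcases i with i | i
      · rfl
      · simp [extZ, vc]
    · apply HS_Syz (d := d)
      rintro (j | j)
      · exact haV j
      · exact heV j
    · rintro _ ⟨w, hw, rfl⟩
      have hw' : w ∈ Syz k n a := hw
      rw [mem_Syz] at hw' ⊢
      simp [Fintype.sum_sum_type, extZ, hw']
    · rintro v ⟨w, hw, hwv⟩
      have hw' : w ∈ Syz k n a := hw
      refine ⟨fun i => v (Sum.inl i), ?_, ?_⟩
      · show _ ∈ Syz k n a
        rw [mem_Syz] at hw' ⊢
        have h5 : ∀ i, w i = x * v (Sum.inl i) := fun i => congrFun hwv (Sum.inl i)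
        have h6 : x • ∑ i, v (Sum.inl i) • a i = 0 := by
          rw [← hw', Finset.smul_sum]
          refine Finset.sum_congr rfl fun i _ => ?_
          rw [smul_smul, h5]
        exact (smul_eq_zero.mp h6).resolve_left hx0
      · funext i
        rcases i with i | i
        · rfl
        · have : 0 = x * v (Sum.inr i) := congrFun hwv (Sum.inr i)
          exact ((mul_eq_zero.mp this.symm).resolve_left hx0).symm
    · convert hS2 using 1
      apply le_antisymm
      · refine sup_le ?_ ?_
        · rintro _ ⟨w, hw, rfl⟩
          have hw' : w ∈ Syz k n a := hw
          rw [mem_Syz] at hw'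
          refine ⟨extZ RR κ κ w, ?_, ?_⟩
          · show _ ∈ Syz k n _
            rw [mem_Syz]
            simp [Fintype.sum_sum_type, extZ, hw']
          · funext i
            rcases i with i | i <;> simp [extZ, diagX]
        · rintro _ ⟨w, hw, rfl⟩
          have hw' : w ∈ Syz k n (Sum.elim a e) := hw
          rw [mem_Syz, Fintype.sum_sum_type] at hw'
          simp only [Sum.elim_inl, Sum.elim_inr] at hw'
          refine ⟨Sum.elim (fun i => x * w (Sum.inl i)) (fun i => w (Sum.inr i)), ?_, ?_⟩
          · show _ ∈ Syz k n _
            rw [mem_Syz, Fintype.sum_sum_type]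
            simp only [Sum.elim_inl, Sum.elim_inr]
            rw [← smul_zero x, ← hw', smul_add, Finset.smul_sum, Finset.smul_sum]
            congr 1
            · exact Finset.sum_congr rfl fun i _ => by rw [smul_smul]
            · exact Finset.sum_congr rfl fun i _ => by rw [smul_comm]
          · funext i
            rcases i with i | i <;> simp [diagX]
      · rintro _ ⟨w, hw, rfl⟩
        have hw' : w ∈ Syz k n (Sum.elim a (fun j => x • e j)) := hw
        rw [mem_Syz, Fintype.sum_sum_type] at hw'
        simp only [Sum.elim_inl, Sum.elim_inr] at hw'
        have hxs : ∑ i, w (Sum.inr i) • x • e i = x • ∑ i, w (Sum.inr i) • e i := by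
          rw [Finset.smul_sum]
          exact Finset.sum_congr rfl fun i _ => by rw [smul_comm]
        rw [hxs] at hw'
        have hmem : ∑ i, w (Sum.inr i) • e i ∈ L := by
          apply hreg
          rw [eq_neg_of_add_eq_zero_right hw']
          exact L.neg_mem (L.sum_mem fun j _ => L.smul_mem _ (haL j))
        rw [← hLa] at hmem
        obtain ⟨v, hv⟩ := mem_span_u.mp hmem
        rw [Submodule.mem_sup]
        refine ⟨extZ RR κ κ (fun i => w (Sum.inl i) + x * v i), ⟨_, ?_, rfl⟩,
          x • Sum.elim (fun i => - v i) (fun i => w (Sum.inr i)), ⟨_, ?_, rfl⟩, ?_⟩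
        · show _ ∈ Syz k n a
          rw [mem_Syz, ← hw', ← hv, Finset.smul_sum, ← Finset.sum_add_distrib]
          exact Finset.sum_congr rfl fun i _ => by rw [add_smul, smul_smul]
        · show _ ∈ Syz k n _
          rw [mem_Syz, Fintype.sum_sum_type]
          simp only [Sum.elim_inl, Sum.elim_inr, neg_smul, Finset.sum_neg_distrib]
          rw [hv]; simp
        · funext i
          rcases i with i | i <;> simp [extZ, diagX]

end PartB3

section PartB4
universe u
variable {k : Type u} [Field k] {n : ℕ}

local notation "RR" => MvPolynomial (Fin n) k

lemma PP_exists (l : ℕ) : ∀ {ι : Type} [Fintype ι] {d : ι → ℤ} {N : Submodule RR (ι → RR)},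
    HS d N → ∃ s : ℤ, PP k n l ι s d N := by
  induction l with
  | zero => intros; exact ⟨0, trivial⟩
  | succ l ih =>
    intro ι _ d N hN
    obtain ⟨m, g, hg⟩ := Submodule.fg_iff_exists_fin_generating_family.mp
      (IsNoetherian.noetherian N)
    choose S hS using fun i => exists_vc_sum d (g i)
    let κ := Σ i : Fin m, S i
    let c : κ → ℤ := fun j => j.2
    let u : κ → ι → RR := fun j => vc d j.2 (g j.1)
    have hu : ∀ j, VH d (c j) (u j) := fun j => VH_vc _ _ _
    have hspan : Submodule.span RR (Set.range u) = N := by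
      apply le_antisymm
      · rw [Submodule.span_le]
        rintro _ ⟨⟨i, s⟩, rfl⟩
        refine hN _ ?_ _
        rw [← hg]; exact Submodule.subset_span ⟨i, rfl⟩
      · rw [← hg, Submodule.span_le]
        rintro _ ⟨i, rfl⟩
        rw [← hS i]
        refine Submodule.sum_mem _ fun s hs => Submodule.subset_span ⟨⟨i, ⟨s, hs⟩⟩, rfl⟩
    obtain ⟨s, hs⟩ := ih (HS_Syz hu)
    obtain ⟨M, hM⟩ := (Set.finite_range c).bddAbove
    refine ⟨max M s, κ, inferInstance, c, u, hu, hspan, fun j => ?_, ?_⟩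
    · exact (hM ⟨j, rfl⟩).trans (le_max_left _ _)
    · exact PP_mono l (by have := le_max_right M s; omega) hs

def FR (k : Type u) [Field k] (n : ℕ) : ℕ → ∀ (ι : Type), ℤ → (ι → ℤ) →
    Submodule (MvPolynomial (Fin n) k) (ι → MvPolynomial (Fin n) k) → Prop
  | 0, _, _, _, N => N = ⊥
  | l + 1, ι, r, d, N => ∃ (κ : Type) (_ : Fintype κ) (c : κ → ℤ)
      (u : κ → ι → MvPolynomial (Fin n) k), (∀ j, VH d (c j) (u j)) ∧
      Submodule.span (MvPolynomial (Fin n) k) (Set.range u) = N ∧ (∀ j, c j ≤ r) ∧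
      FR k n l κ (r + 1) c (Syz k n u)

/-- the surjection onto the span -/
noncomputable def covMap {κ ι : Type} [Fintype κ] {N : Submodule RR (ι → RR)}
    (u : κ → ι → RR) (hu : Submodule.span RR (Set.range u) = N) : (κ → RR) →ₗ[RR] N :=
  (Fintype.linearCombination RR u).codRestrict N (fun w => by
    rw [Fintype.linearCombination_apply, ← hu, mem_span_u]; exact ⟨w, rfl⟩)

lemma covMap_coe {κ ι : Type} [Fintype κ] {N : Submodule RR (ι → RR)}
    (u : κ → ι → RR) (hu : Submodule.span RR (Set.range u) = N) (w : κ → RR) :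
    (covMap u hu w : ι → RR) = ∑ j, w j • u j := by
  simp [covMap, Fintype.linearCombination_apply]

lemma covMap_surj {κ ι : Type} [Fintype κ] {N : Submodule RR (ι → RR)}
    (u : κ → ι → RR) (hu : Submodule.span RR (Set.range u) = N) :
    Function.Surjective (covMap u hu) := by
  rintro ⟨y, hy⟩
  have hy' := hy
  rw [← hu] at hy'
  obtain ⟨w, hw⟩ := mem_span_u.mp hy'
  exact ⟨w, Subtype.ext (by rw [covMap_coe, hw])⟩

lemma covMap_eq_zero {κ ι : Type} [Fintype κ] {N : Submodule RR (ι → RR)}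
    (u : κ → ι → RR) (hu : Submodule.span RR (Set.range u) = N) (w : κ → RR) :
    covMap u hu w = 0 ↔ w ∈ Syz k n u := by
  rw [mem_Syz, ← covMap_coe u hu]
  exact Submodule.coe_eq_zero.symm

lemma Syz_eq_bot_of_proj {κ ι : Type} [Fintype κ] {N : Submodule RR (ι → RR)}
    (u : κ → ι → RR) (hu : Submodule.span RR (Set.range u) = N) [Module.Projective RR N]
    (hm : ∀ w ∈ Syz k n u, ∀ i, coeff 0 (w i) = 0) : Syz k n u = ⊥ := by
  classical
  obtain ⟨s, hs⟩ := Module.projective_lifting_property (covMap u hu) LinearMap.id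
    (covMap_surj u hu)
  have hs' : ∀ y, covMap u hu (s y) = y := fun y => LinearMap.congr_fun hs y
  let p : (κ → RR) →ₗ[RR] (κ → RR) := LinearMap.id - s ∘ₗ covMap u hu
  have hp : ∀ w, p w ∈ Syz k n u := by
    intro w
    rw [← covMap_eq_zero u hu]
    simp [p, hs']
  have hp2 : ∀ w ∈ Syz k n u, p w = w := by
    intro w hw
    rw [← covMap_eq_zero u hu] at hw
    simp [p, hw]
  let m : Ideal RR := RingHom.ker (constantCoeff (σ := Fin n) (R := k))
  have hmm : ∀ w ∈ Syz k n u, ∀ i, w i ∈ m := by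
    intro w hw i
    rw [RingHom.mem_ker, constantCoeff_eq]; exact hm w hw i
  have key : ∀ (N : ℕ), ∀ w ∈ Syz k n u, ∀ i, w i ∈ m ^ N := by
    intro N
    induction N with
    | zero => intros; simp
    | succ N ih =>
      intro w hw i
      have h1 : w = ∑ j, w j • p (Pi.single j 1) := by
        have h0 : w = ∑ j, w j • (Pi.single j 1 : κ → RR) := by
          funext i
          simp [Finset.sum_apply, Pi.single_apply]
        calc w = p w := (hp2 w hw).symm
          _ = p (∑ j, w j • (Pi.single j 1 : κ → RR)) := congrArg p h0
          _ = _ := by rw [map_sum]; exact Finset.sum_congr rfl fun j _ => map_smul _ _ _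
      rw [h1, Finset.sum_apply, pow_succ]
      refine Ideal.sum_mem _ fun j _ => ?_
      exact Ideal.mul_mem_mul (ih w hw j) (hmm _ (hp _) i)
  have hmtop : m ≠ ⊤ := RingHom.ker_ne_top _
  rw [eq_bot_iff]
  intro w hw
  rw [Submodule.mem_bot]
  funext i
  have : w i ∈ (⨅ N : ℕ, m ^ N) := by
    rw [Submodule.mem_iInf]; exact fun N => key N w hw i
  rw [Ideal.iInf_pow_eq_bot_of_isDomain m hmtop] at this
  exact this

lemma exists_free_cover {ι : Type} {r : ℤ} {d : ι → ℤ} {N : Submodule RR (ι → RR)}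
    [Module.Projective RR N] (m : ℕ) : ∀ (κ : Type) [Fintype κ] (_ : Fintype.card κ = m)
    (c : κ → ℤ) (u : κ → ι → RR), (∀ j, VH d (c j) (u j)) →
    Submodule.span RR (Set.range u) = N → (∀ j, c j ≤ r) → FR k n 1 ι r d N := by
  classical
  induction m using Nat.strong_induction_on with
  | _ m ih =>
    intro κ _ hκ c u h1 h2 h3
    by_cases hm : ∀ w ∈ Syz k n u, ∀ i, coeff 0 (w i) = 0
    · exact ⟨κ, inferInstance, c, u, h1, h2, h3, Syz_eq_bot_of_proj u h2 hm⟩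
    · push Not at hm
      obtain ⟨w, hw, i, hi⟩ := hm
      have hw' := HS_Syz h1 w hw (c i)
      set w' := vc c (c i) w with hw'def
      have hwi : w' i = C (coeff 0 (w i)) := by
        have h5 : w' i = hc 0 (w i) := by simp [hw'def, vc]
        rw [h5, hd_zero_deg (hd_hc 0 (w i)), coeff_hc]
        simp
      rw [mem_Syz] at hw'
      let κ' := {j : κ // j ≠ i}
      refine ih (Fintype.card κ') ?_ κ' rfl (fun j => c j) (fun j => u j) (fun j => h1 j) ?_
        (fun j => h3 j)
      · rw [← hκ]; exact Fintype.card_subtype_lt (x := i) (by simp)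
      · apply le_antisymm
        · rw [← h2]
          apply Submodule.span_mono
          rintro _ ⟨j, rfl⟩; exact ⟨j, rfl⟩
        · rw [← h2, Submodule.span_le]
          have hne : ∀ j, j ≠ i → u j ∈ Submodule.span RR (Set.range fun j : κ' => u j) :=
            fun j hj => Submodule.subset_span ⟨⟨j, hj⟩, rfl⟩
          rintro _ ⟨j, rfl⟩
          by_cases hj : j = i
          · subst hj
            rw [← Finset.add_sum_erase _ _ (Finset.mem_univ j), hwi] at hw'
            have h6 : (C (coeff 0 (w j)) : RR) • u j ∈
                Submodule.span RR (Set.range fun j : κ' => u j) := by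
              rw [eq_neg_of_add_eq_zero_left hw']
              refine Submodule.neg_mem _ (Submodule.sum_mem _ fun l hl => ?_)
              exact Submodule.smul_mem _ _ (hne l (Finset.ne_of_mem_erase hl))
            have h7 := Submodule.smul_mem _ (C (coeff 0 (w j))⁻¹ : RR) h6
            rwa [smul_smul, ← C_mul, inv_mul_cancel₀ hi, C_1, one_smul] at h7
          · exact hne j hj

open CategoryTheory in
lemma FR_of_PP (l : ℕ) : ∀ {ι : Type} {r : ℤ} {d : ι → ℤ} {N : Submodule RR (ι → RR)},
    PP k n (l + 1) ι r d N → HasProjectiveDimensionLT (ModuleCat.of RR N) (l + 1) →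
    FR k n (l + 1) ι r d N := by
  induction l with
  | zero =>
    intro ι r d N hP hpd
    obtain ⟨κ, _, c, u, h1, h2, h3, _⟩ := hP
    have h4 : Projective (ModuleCat.of RR N) :=
      projective_iff_hasProjectiveDimensionLT_one.mpr hpd
    have : Module.Projective RR N := (IsProjective.iff_projective (R := RR) N).mpr h4
    exact exists_free_cover _ κ rfl c u h1 h2 h3
  | succ l ih =>
    intro ι r d N hP hpd
    obtain ⟨κ, _, c, u, h1, h2, h3, h4⟩ := hP
    refine ⟨κ, inferInstance, c, u, h1, h2, h3, ih h4 ?_⟩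
    have S := mkShortExact (Syz k n u).subtype (covMap u h2) (Submodule.subtype_injective _)
      (covMap_surj u h2) (by
        intro w
        rw [covMap_eq_zero]
        simp)
    have hproj : Projective (ModuleCat.of RR (κ → RR)) :=
      (IsProjective.iff_projective (R := RR) (κ → RR)).mp inferInstance
    exact (S.hasProjectiveDimensionLT_X₃_iff l hproj).mp hpd

end PartB4

section PartB5
universe u
variable {k : Type u} [Field k] {n : ℕ}

local notation "RR" => MvPolynomial (Fin n) k

def cb (m : ℕ) (b : ℕ → ℕ) : ℕ → ℕ
  | 0 => m
  | i + 1 => b i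

def cD {m : ℕ} {b : ℕ → ℕ} (D0 : Fin m → ℤ) (D : ∀ i, Fin (b i) → ℤ) : ∀ i, Fin (cb m b i) → ℤ
  | 0 => D0
  | i + 1 => D i

def cA {R : Type*} {m : ℕ} {b : ℕ → ℕ} (A0 : Matrix (Fin m) (Fin (b 0)) R)
    (A : ∀ i, Matrix (Fin (b i)) (Fin (b (i + 1))) R) :
    ∀ i, Matrix (Fin (cb m b i)) (Fin (cb m b (i + 1))) R
  | 0 => A0
  | i + 1 => A i

lemma res_of_FR (l : ℕ) : ∀ {ι : Type} {r : ℤ} {d : ι → ℤ} {N : Submodule RR (ι → RR)},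
    FR k n l ι r d N → ∃ (b : ℕ → ℕ) (D : ∀ i, Fin (b i) → ℤ) (A0 : Matrix ι (Fin (b 0)) RR)
      (A : ∀ i, Matrix (Fin (b i)) (Fin (b (i + 1))) RR), (∀ i, l ≤ i → b i = 0) ∧
      (∀ i j, D i j ≤ r + i) ∧ (∀ i c, HomogOfDeg (A0 i c) (D 0 c - d i)) ∧
      (∀ i r c, HomogOfDeg (A i r c) (D (i + 1) c - D i r)) ∧
      (∀ w, w ∈ N ↔ ∃ z, A0.mulVec z = w) ∧ Function.Exact (A 0).mulVec A0.mulVec ∧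
      ∀ i, Function.Exact (A (i + 1)).mulVec (A i).mulVec := by
  induction l with
  | zero =>
    intro ι r d N hN
    change N = ⊥ at hN
    subst hN
    refine ⟨fun _ => 0, fun _ => Fin.elim0, fun _ => Fin.elim0, fun _ => Fin.elim0,
      fun _ _ => rfl, fun _ j => j.elim0, fun _ j => j.elim0, fun _ j => j.elim0, ?_, ?_, ?_⟩
    · intro w
      constructor
      · intro hw
        refine ⟨Fin.elim0, ?_⟩
        rw [Submodule.mem_bot] at hw
        rw [hw]; funext i; simp [Matrix.mulVec, dotProduct]
      · rintro ⟨z, rfl⟩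
        rw [Submodule.mem_bot]; funext i; simp [Matrix.mulVec, dotProduct]
    · intro w
      exact ⟨fun _ => ⟨Fin.elim0, Subsingleton.elim _ _⟩, fun _ => by
        funext i; simp [Matrix.mulVec, dotProduct]⟩
    · intro _ w
      exact ⟨fun _ => ⟨Fin.elim0, Subsingleton.elim _ _⟩, fun _ => Subsingleton.elim _ _⟩
  | succ l ih =>
    intro ι r d N hN
    obtain ⟨κ, _, c, u, h1, h2, h3, h4⟩ := hN
    obtain ⟨b, D, A0, A, hb, hD, hA0, hA, hN, hE0, hE⟩ := ih h4
    let e : κ ≃ Fin (Fintype.card κ) := Fintype.equivFin κ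
    let A0' : Matrix (Fin (Fintype.card κ)) (Fin (b 0)) RR := fun i j => A0 (e.symm i) j
    let B : Matrix ι (Fin (Fintype.card κ)) RR := fun i j => u (e.symm j) i
    have hA0' : ∀ z, A0'.mulVec z = fun i => A0.mulVec z (e.symm i) := fun z => rfl
    have hB : ∀ w, B.mulVec w = ∑ j, w (e j) • u j := by
      intro w
      funext i
      simp only [Matrix.mulVec, dotProduct, Finset.sum_apply, Pi.smul_apply, smul_eq_mul, B]
      rw [← e.sum_comp]
      refine Finset.sum_congr rfl fun j _ => ?_
      rw [Equiv.symm_apply_apply, mul_comm]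
    refine ⟨cb (Fintype.card κ) b, cD (fun j => c (e.symm j)) D, B, cA A0' A, ?_, ?_, ?_, ?_, ?_, ?_, ?_⟩
    · rintro (_ | i) hi
      · omega
      · exact hb i (by omega)
    · rintro (_ | i) j
      · have := h3 (e.symm j)
        simp only [cD]; push_cast; omega
      · have := hD i j
        simp only [cD]; push_cast; omega
    · intro i j
      exact h1 (e.symm j) i
    · rintro (_ | i) p q
      · exact hA0 (e.symm p) q
      · exact hA i p q
    · intro w
      rw [← h2, mem_span_u]
      constructor
      · rintro ⟨z, rfl⟩
        refine ⟨fun j => z (e.symm j), ?_⟩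
        exact (hB _).trans (by simp)
      · rintro ⟨z, rfl⟩
        exact ⟨fun j => z (e j), (hB z).symm⟩
    · intro w
      change Fin (Fintype.card κ) → RR at w
      change B.mulVec w = 0 ↔ ∃ z, A0'.mulVec z = w
      rw [hB w]
      have h5 := hN (fun j => w (e j))
      rw [mem_Syz] at h5
      rw [h5]
      constructor
      · rintro ⟨z, hz⟩
        refine ⟨z, ?_⟩
        rw [hA0', hz]; simp
      · rintro ⟨z, hz⟩
        refine ⟨z, ?_⟩
        rw [← hz]; funext j; simp [hA0']
    · rintro (_ | i)
      · have key : ∀ w : Fin (b 0) → RR, A0'.mulVec w = 0 ↔ A0.mulVec w = 0 := by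
          intro w
          rw [hA0']
          constructor
          · intro h; funext j
            have := congrFun h (e j)
            simpa using this
          · intro h; rw [h]; rfl
        exact fun w => (key w).trans (hE0 w)
      · exact hE i

/-- ideal as a submodule of the free module of rank one -/
noncomputable def JU (J : Ideal (MvPolynomial (Fin n) k)) :
    Submodule (MvPolynomial (Fin n) k) (Fin 1 → MvPolynomial (Fin n) k) :=
  Submodule.comap (LinearMap.proj 0) J

lemma mem_JU {J : Ideal RR} {w : Fin 1 → RR} : w ∈ JU J ↔ w 0 ∈ J := Iff.rfl

lemma gfr_of_FR {l : ℕ} {r : ℤ} (hr : 0 ≤ r) {J : Ideal RR}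
    (h : FR k n l (Fin 1) (r + 1) (fun _ => 0) (JU J)) :
    ∃ F : GradedFreeRes J, ∀ (i : ℕ) (j : Fin (F.b i)), F.D i j - (i : ℤ) ≤ r := by
  obtain ⟨b, D, A0, A, hb, hD, hA0, hA, hN, hE0, hE⟩ := res_of_FR l h
  refine ⟨⟨l, cb 1 b, ?_, cD (fun _ => 0) D, cA A0 A, fun _ => 1, ?_, ?_, ?_, ?_, ?_⟩, ?_⟩
  · rintro (_ | i) hi
    · omega
    · exact hb i (by omega)
  · intro _; exact hd_one
  · rintro (_ | i) p q
    · exact hA0 p q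
    · exact hA i p q
  · intro y
    obtain ⟨x, rfl⟩ := Ideal.Quotient.mk_surjective y
    refine ⟨fun _ => x, ?_⟩
    change Ideal.Quotient.mk J (∑ r : Fin 1, x * 1) = _
    simp
  · intro w
    change Fin 1 → RR at w
    change Ideal.Quotient.mk J (∑ r : Fin 1, w r * 1) = 0 ↔ ∃ z, A0.mulVec z = w
    rw [← hN w, mem_JU, Ideal.Quotient.eq_zero_iff_mem]
    simp
  · rintro (_ | i)
    · exact hE0
    · exact hE i
  · rintro (_ | i) j
    · simp only [cD]; push_cast; omega
    · have := hD i j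
      simp only [cD]; push_cast; omega

lemma PP_of_gfr {J : Ideal RR} (F : GradedFreeRes J) {r : ℤ}
    (hr : ∀ (i : ℕ) (j : Fin (F.b i)), F.D i j - (i : ℤ) ≤ r) (l : ℕ) :
    ∀ i, PP k n l (Fin (F.b i)) (r + i + 1) (F.D i) (LinearMap.range (F.A i).mulVecLin) := by
  induction l with
  | zero => intro; trivial
  | succ l ih =>
    intro i
    have hsum : ∀ w : Fin (F.b (i+1)) → RR,
        ∑ j, w j • (fun p => F.A i p j) = (F.A i).mulVec w := by
      intro w; funext p
      simp [Matrix.mulVec, dotProduct, Finset.sum_apply, mul_comm]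
    refine ⟨Fin (F.b (i + 1)), inferInstance, F.D (i + 1), fun j p => F.A i p j, ?_, ?_, ?_, ?_⟩
    · intro j p; exact F.hA i p j
    · ext w
      rw [mem_span_u, LinearMap.mem_range]
      simp only [hsum]; rfl
    · intro j; have := hr (i + 1) j; push_cast at this; omega
    · have h1 : Syz k n (fun j p => F.A i p j) = LinearMap.range (F.A (i+1)).mulVecLin := by
        ext w
        rw [mem_Syz, hsum, LinearMap.mem_range]
        exact F.hex i w
      rw [h1]
      have := ih (i + 1)
      push_cast at this
      rw [show r + (i : ℤ) + 1 + 1 = r + (i + 1) + 1 by ring]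
      exact this

lemma gfr_one_le {J : Ideal RR} (hJ : MI J) (F : GradedFreeRes J) :
    ∃ a : Fin (F.b 0) → RR, (∀ i, HomogOfDeg (a i) (0 - F.D 0 i)) ∧
      Ideal.Quotient.mk J (∑ i, a i * F.v i) = 1 := by
  obtain ⟨w, hw⟩ := F.haug 1
  refine ⟨fun i => hc (0 - F.D 0 i) (w i), fun i => hd_hc _ _, ?_⟩
  have h1 : hc 0 (∑ i, w i * F.v i) = ∑ i, hc (0 - F.D 0 i) (w i) * F.v i := by
    rw [hc_sum]
    exact Finset.sum_congr rfl fun i _ => hc_mul_right (F.hv i) _ _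
  rw [← h1]
  have h2 : (∑ i, w i * F.v i) - 1 ∈ J := by
    rw [← Ideal.Quotient.eq_zero_iff_mem, map_sub, map_one, sub_eq_zero]; exact hw
  have h3 := MI.hc_mem hJ h2 0
  have h4 : hc 0 ((∑ i, w i * F.v i) - 1) = hc 0 (∑ i, w i * F.v i) - 1 := by
    have := hc_add 0 ((∑ i, w i * F.v i) - 1) (1 : RR)
    rw [sub_add_cancel, hc_eq (hd_one)] at this
    rw [this]; ring
  rw [h4] at h3
  rw [← sub_eq_zero, ← map_one (Ideal.Quotient.mk J), ← map_sub, Ideal.Quotient.eq_zero_iff_mem]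
  exact h3

lemma gfr_nonneg {J : Ideal RR} (hJ : MI J) (hJ1 : J ≠ ⊤) (F : GradedFreeRes J) {r : ℤ}
    (hr : ∀ (i : ℕ) (j : Fin (F.b i)), F.D i j - (i : ℤ) ≤ r) : 0 ≤ r := by
  obtain ⟨a, ha, h⟩ := gfr_one_le hJ F
  by_contra hneg
  have : ∑ i, a i * F.v i = 0 := by
    refine Finset.sum_eq_zero fun i _ => ?_
    have := hr 0 i
    rw [hd_neg_eq_zero (F.hv i) (by push_cast at this; omega), mul_zero]
  rw [this, map_zero] at h
  apply hJ1
  rw [Ideal.eq_top_iff_one, ← Ideal.Quotient.eq_zero_iff_mem, map_one, h]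

lemma PP_JU_of_gfr {J : Ideal RR} (hJ : MI J) (hJ1 : J ≠ ⊤) (F : GradedFreeRes J) {r : ℤ}
    (hr : ∀ (i : ℕ) (j : Fin (F.b i)), F.D i j - (i : ℤ) ≤ r) (l : ℕ) :
    PP k n l (Fin 1) (r + 1) (fun _ => 0) (JU J) := by
  obtain ⟨a, ha, h⟩ := gfr_one_le hJ F
  have hr0 := gfr_nonneg hJ hJ1 F hr
  have h0 := PP_of_gfr F hr l 0
  let q : RR → RR ⧸ J := fun x => Ideal.Quotient.mk J x
  have hq : ∀ x y : RR, x • q y = q (x * y) := fun x y => rfl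
  have hs : LinearMap.range (F.A 0).mulVecLin = Syz k n (fun j => q (F.v j)) := by
    ext w
    rw [mem_Syz, LinearMap.mem_range]
    have := F.hex0 w
    simp only [map_sum] at this
    exact this.symm
  rw [hs] at h0
  have h2 := PP_schanuel (κ' := Fin 1) (u' := fun _ => q 1) (c' := fun _ => 0)
    (a := fun _ i => a i) (b := fun j _ => F.v j) (s := r + 1) l ?_ ?_ ?_ ?_ ?_ ?_
    (by simpa using h0)
  · convert h2
    ext w
    rw [mem_JU, mem_Syz]
    simp [hq]
    exact Ideal.Quotient.eq_zero_iff_mem.symm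
  · intro j
    simp only [hq]
    rw [show q 1 = 1 from rfl, ← h, map_sum]
  · intro j i; exact ha i
  · intro j; omega
  · intro j; simp [hq]
  · intro j i; simpa using F.hv j
  · intro j; have := hr 0 j; push_cast at this; omega

end PartB5

section PartB6
universe u
variable {k : Type u} [Field k] {n : ℕ}

local notation "RR" => MvPolynomial (Fin n) k

open CategoryTheory in
lemma pd_span (m : ℕ) : ∀ (T : Finset (Fin n →₀ ℕ)), T.card ≤ m →
    ∃ p, HasProjectiveDimensionLT
      (ModuleCat.of RR (RR ⧸ Ideal.span ((fun e => monomial e (1 : k)) '' (T : Set (Fin n →₀ ℕ))))) p := by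
  classical
  have hbase : ∃ p, HasProjectiveDimensionLT
      (ModuleCat.of RR (RR ⧸ Ideal.span ((fun e => monomial e (1 : k)) ''
        ((∅ : Finset (Fin n →₀ ℕ)) : Set (Fin n →₀ ℕ))))) p := by
    refine ⟨1, ?_⟩
    rw [← projective_iff_hasProjectiveDimensionLT_one]
    have : Module.Projective RR (RR ⧸ Ideal.span ((fun e => monomial e (1 : k)) ''
        ((∅ : Finset (Fin n →₀ ℕ)) : Set (Fin n →₀ ℕ)))) :=
      Module.Projective.of_equiv (Submodule.quotEquivOfEqBot _ (by simp)).symm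
    exact (IsProjective.iff_projective (R := RR) _).mp this
  induction m with
  | zero =>
    intro T hT
    rw [Nat.le_zero, Finset.card_eq_zero] at hT
    subst hT
    exact hbase
  | succ m ih =>
    intro T hT
    rcases T.eq_empty_or_nonempty with rfl | ⟨a, ha⟩
    · exact hbase
    · set T0 := T.erase a with hT0
      have hc0 : T0.card ≤ m := by rw [hT0, Finset.card_erase_of_mem ha]; omega
      obtain ⟨p, hp⟩ := ih T0 hc0
      obtain ⟨q, hq⟩ := ih (T0.image (fun t => t - a)) (Finset.card_image_le.trans hc0)
      set J := Ideal.span ((fun e => monomial e (1 : k)) '' (T : Set (Fin n →₀ ℕ))) with hJ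
      set J0 := Ideal.span ((fun e => monomial e (1 : k)) '' (T0 : Set (Fin n →₀ ℕ))) with hJ0
      set J1 := Ideal.span ((fun e => monomial e (1 : k)) ''
        ((T0.image (fun t => t - a) : Finset _) : Set (Fin n →₀ ℕ))) with hJ1
      have hmem : ∀ v : RR, monomial a (1 : k) * v ∈ J0 ↔ v ∈ J1 := by
        intro v
        rw [hJ0, hJ1, mem_ideal_span_monomial_image, mem_ideal_span_monomial_image]
        constructor
        · intro h e he
          have : a + e ∈ (monomial a (1 : k) * v).support := by
            rw [mem_support_iff, coeff_monomial_mul, one_mul]; exact mem_support_iff.mp he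
          obtain ⟨t, ht, hle⟩ := h _ this
          refine ⟨t - a, by simpa using ⟨t, ht, rfl⟩, ?_⟩
          rwa [tsub_le_iff_left]
        · intro h e he
          have he2 := support_mul _ _ he
          obtain ⟨a', ha', e', he', rfl⟩ := Finset.mem_add.mp he2
          have := support_monomial_subset ha'
          rw [Finset.mem_singleton] at this
          subst this
          obtain ⟨t, ht, hle⟩ := h _ he'
          simp only [Finset.coe_image, Set.mem_image] at ht
          obtain ⟨t', ht', rfl⟩ := ht
          exact ⟨t', ht', by rwa [tsub_le_iff_left] at hle⟩
      have hle : J0 ≤ J := Ideal.span_mono (Set.image_mono (by simp [hT0]))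
      have hJJ : J = J0 ⊔ Ideal.span {monomial a (1 : k)} := by
        rw [hJ, hJ0, ← Ideal.span_union]
        congr 1
        rw [hT0, ← Set.image_singleton (f := fun e => monomial e (1 : k)), ← Set.image_union]
        congr 1
        ext t
        simp only [Finset.coe_erase, Set.mem_union, Set.mem_sdiff, Set.mem_singleton_iff, Finset.mem_coe]
        by_cases h : t = a
        · simp [h, ha]
        · simp [h]
      let f : (RR ⧸ J1) →ₗ[RR] (RR ⧸ J0) :=
        Submodule.mapQ J1 J0 (LinearMap.lsmul RR RR (monomial a (1 : k))) (fun v hv => (hmem v).2 hv)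
      let g : (RR ⧸ J0) →ₗ[RR] (RR ⧸ J) := Submodule.mapQ J0 J LinearMap.id hle
      have S := mkShortExact f g ?_ ?_ ?_
      · refine ⟨max q p + 1, S.hasProjectiveDimensionLT_X₃ (max q p) ?_ ?_⟩
        · exact hasProjectiveDimensionLT_of_ge _ q _ (le_max_left _ _)
        · exact hasProjectiveDimensionLT_of_ge _ p _ ((le_max_right _ _).trans (Nat.le_succ _))
      · rw [← LinearMap.ker_eq_bot, LinearMap.ker_eq_bot']
        intro x hx
        obtain ⟨v, rfl⟩ := Submodule.mkQ_surjective _ x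
        have : f (J1.mkQ v) = J0.mkQ (monomial a (1 : k) * v) := rfl
        rw [this, Submodule.mkQ_apply, Submodule.Quotient.mk_eq_zero, hmem] at hx
        rw [Submodule.mkQ_apply, Submodule.Quotient.mk_eq_zero]; exact hx
      · intro x
        obtain ⟨v, rfl⟩ := Submodule.mkQ_surjective _ x
        exact ⟨J0.mkQ v, rfl⟩
      · intro x
        obtain ⟨v, rfl⟩ := Submodule.mkQ_surjective _ x
        have h1 : g (J0.mkQ v) = J.mkQ v := rfl
        rw [h1, Submodule.mkQ_apply, Submodule.mkQ_apply, Submodule.Quotient.mk_eq_zero]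
        constructor
        · intro hv
          rw [hJJ, Submodule.mem_sup] at hv
          obtain ⟨y, hy, z, hz, rfl⟩ := hv
          obtain ⟨w, rfl⟩ := Ideal.mem_span_singleton'.mp hz
          refine ⟨J1.mkQ w, ?_⟩
          change J0.mkQ (monomial a (1 : k) * w) = J0.mkQ _
          rw [← sub_eq_zero, ← map_sub, Submodule.mkQ_apply, Submodule.Quotient.mk_eq_zero]
          have : monomial a (1 : k) * w - (y + w * monomial a 1) = - y := by ring
          rw [this]; exact J0.neg_mem hy
        · rintro ⟨x, hx⟩
          obtain ⟨w, rfl⟩ := Submodule.mkQ_surjective _ x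
          change J0.mkQ (monomial a (1 : k) * w) = J0.mkQ v at hx
          rw [← sub_eq_zero, ← map_sub, Submodule.mkQ_apply, Submodule.Quotient.mk_eq_zero] at hx
          have h3 : monomial a (1 : k) * w ∈ J := by
            rw [hJJ]
            exact Ideal.mem_sup_right (Ideal.mul_mem_right _ _ (Ideal.mem_span_singleton_self _))
          have := J.sub_mem h3 (hle hx)
          simpa using this

lemma MI.exists_finset {J : Ideal RR} (hJ : MI J) : ∃ T : Finset (Fin n →₀ ℕ),
    J = Ideal.span ((fun e => monomial e (1 : k)) '' (T : Set (Fin n →₀ ℕ))) := by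
  classical
  have h1 : J = Ideal.span ((fun e => monomial e (1 : k)) '' {e | monomial e (1 : k) ∈ J}) := by
    refine hJ.eq_of (MI_span _) fun e => ⟨fun h => Ideal.subset_span ⟨e, h, rfl⟩, fun h => ?_⟩
    refine Ideal.span_le.mpr ?_ h
    rintro _ ⟨e, he, rfl⟩; exact he
  have h2 : (Ideal.span ((fun e => monomial e (1 : k)) '' {e | monomial e (1 : k) ∈ J})).FG :=
    IsNoetherian.noetherian _
  obtain ⟨s, hs, hs2⟩ := (Submodule.fg_span_iff_fg_span_finset_subset _).mp h2
  obtain ⟨T, _, rfl⟩ := Finset.subset_set_image_iff.mp hs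
  refine ⟨T, h1.trans (Eq.trans hs2 ?_)⟩
  rw [Finset.coe_image]

open CategoryTheory in
lemma pd_JU {J : Ideal RR} (hJ : MI J) : ∃ p, HasProjectiveDimensionLT
    (ModuleCat.of RR (JU J)) (p + 1) := by
  obtain ⟨T, hT⟩ := hJ.exists_finset
  obtain ⟨p, hp⟩ := pd_span (k := k) _ T le_rfl
  rw [← hT] at hp
  have S := mkShortExact (JU J).subtype (J.mkQ ∘ₗ (LinearMap.proj 0 : (Fin 1 → RR) →ₗ[RR] RR))
    (Submodule.subtype_injective _) (by
      intro x
      obtain ⟨v, rfl⟩ := Submodule.mkQ_surjective _ x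
      exact ⟨fun _ => v, rfl⟩) (by
      intro w
      change J.mkQ (w 0) = 0 ↔ _
      rw [Submodule.mkQ_apply, Submodule.Quotient.mk_eq_zero]
      simp [mem_JU])
  have hproj : Projective (ModuleCat.of RR (Fin 1 → RR)) :=
    (IsProjective.iff_projective (R := RR) (Fin 1 → RR)).mp inferInstance
  refine ⟨p, (S.hasProjectiveDimensionLT_X₃_iff p hproj).mp ?_⟩
  exact hasProjectiveDimensionLT_of_ge _ p _ (by omega)

lemma HS_JU {J : Ideal RR} (hJ : MI J) : HS (fun _ => 0) (JU J) := by
  intro v hv c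
  rw [mem_JU] at hv ⊢
  exact hJ.hc_mem hv _

/-- regularity is weakly monotone under our basic colon step -/
theorem reg_step {J J0 J' : Ideal RR} (hJ : MI J) (hJ0 : MI J0) (hJ' : MI J') (hJ1 : J' ≠ ⊤)
    (x : RR) (hx : HomogOfDeg x 1) (hx0 : x ≠ 0) (hreg : ∀ v, x * v ∈ J0 → v ∈ J0) (hle : J0 ≤ J')
    (hJJ : J = J0 ⊔ Ideal.span {x} * J') : regQuot J' ≤ regQuot J := by
  have hJtop : J ≠ ⊤ := by
    intro h
    apply hJ1
    rw [eq_top_iff, ← h, hJJ]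
    exact sup_le hle Ideal.mul_le_right
  unfold regQuot
  apply csInf_le_csInf
  · exact ⟨0, fun r ⟨F, hF⟩ => gfr_nonneg hJ' hJ1 F hF⟩
  · obtain ⟨p, hp⟩ := pd_JU hJ
    obtain ⟨s, hs⟩ := PP_exists (k := k) (p + 1) (HS_JU hJ)
    refine ⟨max s 0, gfr_of_FR (le_max_right _ _) (FR_of_PP p (PP_mono _ ?_ hs) hp)⟩
    have := le_max_left s 0
    omega
  · rintro r ⟨F, hF⟩
    obtain ⟨p, hp⟩ := pd_JU hJ'
    refine gfr_of_FR (gfr_nonneg hJ hJtop F hF) (FR_of_PP p ?_ hp)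
    refine PP_reduce x hx hx0 (p + 1) (HS_JU hJ0) (HS_JU hJ') (fun w hw => hle hw)
      (fun w hw => hreg _ hw) ?_
    have h1 := PP_JU_of_gfr hJ hJtop F hF (p + 1)
    have h2 : JU J = JU J0 ⊔ (JU J').map (LinearMap.lsmul RR (Fin 1 → RR) x) := by
      ext w
      rw [mem_JU, hJJ, Submodule.mem_sup, Submodule.mem_sup]
      constructor
      · rintro ⟨y, hy, z, hz, h⟩
        obtain ⟨z', hz', rfl⟩ := Ideal.mem_span_singleton_mul.mp hz
        refine ⟨fun _ => y, hy, fun _ => x * z', ⟨fun _ => z', hz', rfl⟩, ?_⟩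
        funext i
        rw [Subsingleton.elim i 0]; exact h
      · rintro ⟨y, hy, _, ⟨z, hz, rfl⟩, rfl⟩
        exact ⟨y 0, hy, x * z 0, Ideal.mul_mem_mul (Ideal.mem_span_singleton_self _) hz, rfl⟩
    rwa [h2] at h1

lemma mx_ne_top : mxIdeal k n ≠ ⊤ := by
  intro h
  have : mxIdeal k n ≤ RingHom.ker (constantCoeff (σ := Fin n) (R := k)) := by
    unfold mxIdeal
    rw [Ideal.span_le]
    rintro _ ⟨i, rfl⟩
    simp
  rw [h, top_le_iff] at this
  exact RingHom.ker_ne_top _ this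

lemma MI.le_mx {J : Ideal RR} (hJ : MI J) (h : J ≠ ⊤) : J ≤ mxIdeal k n := by
  apply hJ.le_of
  intro e he
  by_cases h0 : e = 0
  · subst h0
    exact absurd ((Ideal.eq_top_iff_one _).mpr he) h
  · obtain ⟨i, hi⟩ := Finsupp.ne_iff.mp h0
    refine MI.mono (e := Finsupp.single i 1) ?_ (Ideal.subset_span ⟨i, rfl⟩)
    rw [Finsupp.single_le_iff]
    simp at hi; omega

theorem var_step {J J' : Ideal RR} (i : Fin n) (hJ : MI J) (hJ' : MI J') (hJ1 : J' ≠ ⊤)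
    (h : ∀ e, monomial (e + Finsupp.single i 1) (1 : k) ∈ J ↔ monomial e (1 : k) ∈ J') :
    pdepth J ≤ pdepth J' ∧ regQuot J' ≤ regQuot J := by
  classical
  let T : Set (Fin n →₀ ℕ) := {e | e i = 0 ∧ monomial e (1 : k) ∈ J}
  let J0 : Ideal RR := Ideal.span ((fun e => monomial e (1 : k)) '' T)
  have hJ0 : MI J0 := MI_span _
  have mem0 : ∀ e, monomial e (1 : k) ∈ J0 ↔ monomial (e.erase i) (1 : k) ∈ J := by
    intro e
    change monomial e (1 : k) ∈ Ideal.span _ ↔ _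
    rw [mem_ideal_span_monomial_image]
    constructor
    · intro h
      obtain ⟨t, ht, hle⟩ := h e (by simp [mem_support_iff])
      refine MI.mono ?_ ht.2
      intro j
      by_cases hj : j = i
      · rw [hj, ht.1]; exact Nat.zero_le _
      · rw [Finsupp.erase_ne hj]; exact hle j
    · intro h e' he'
      have := support_monomial_subset he'
      rw [Finset.mem_singleton] at this
      subst this
      refine ⟨_, ⟨by simp, h⟩, ?_⟩
      intro j
      by_cases hj : j = i
      · rw [hj]; simp
      · rw [Finsupp.erase_ne hj]
  have herase : ∀ e : Fin n →₀ ℕ, (e + Finsupp.single i 1).erase i = e.erase i := by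
    intro e; rw [Finsupp.erase_add]; simp
  have hleJ : J0 ≤ J := by
    change Ideal.span _ ≤ _
    rw [Ideal.span_le]
    rintro _ ⟨e, he, rfl⟩; exact he.2
  have hJJ' : J ≤ J' := hJ.le_of fun e he => (h e).1 (MI.mono (by simp) he)
  have hreg : ∀ v, (X i : RR) * v ∈ J0 → v ∈ J0 := by
    intro v hv
    rw [hJ0.mem_iff] at hv ⊢
    intro e he
    have h1 : e + Finsupp.single i 1 ∈ (X i * v).support := by
      rw [mem_support_iff, mul_comm, coeff_mul_X]; exact mem_support_iff.mp he
    have h2 := hv _ h1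
    rw [mem0, herase, ← mem0] at h2
    exact h2
  have hEq : J = J0 ⊔ Ideal.span {(X i : RR)} * J' := by
    apply le_antisymm
    · apply hJ.le_of
      intro e he
      by_cases hi : e i = 0
      · exact Ideal.mem_sup_left (Ideal.subset_span ⟨e, ⟨hi, he⟩, rfl⟩)
      · apply Ideal.mem_sup_right
        have h1 : e - Finsupp.single i 1 + Finsupp.single i 1 = e := by
          apply tsub_add_cancel_of_le
          rw [Finsupp.single_le_iff]; omega
        rw [← h1, h] at he
        have h2 := Ideal.mul_mem_mul (Ideal.mem_span_singleton_self (X i : RR)) he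
        rwa [X, monomial_mul, one_mul, add_comm, h1] at h2
    · refine sup_le hleJ ?_
      intro p hp
      obtain ⟨z, hz, rfl⟩ := Ideal.mem_span_singleton_mul.mp hp
      rw [hJ'.mem_iff] at hz
      rw [hJ.mem_iff]
      intro e he
      rw [support_X_mul] at he
      obtain ⟨e', he', rfl⟩ := Finset.mem_map.mp he
      have := (h e').2 (hz e' he')
      simpa [addLeftEmbedding, add_comm] using this
  refine ⟨?_, ?_⟩
  · exact pdepth_le_of J J0 J' mx_ne_top (X i) (Ideal.subset_span ⟨i, rfl⟩) hreg
      (hleJ.trans hJJ') (hJ'.le_mx hJ1) hEq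
  · exact reg_step hJ hJ0 hJ' hJ1 (X i) (hd_X i) (X_ne_zero i) hreg (hleJ.trans hJJ') hEq

theorem set_step (F : Finset (Fin n)) : ∀ {J J' : Ideal RR}, MI J → MI J' → J' ≠ ⊤ →
    (∀ e, monomial (e + indF F) (1 : k) ∈ J ↔ monomial e (1 : k) ∈ J') →
    pdepth J ≤ pdepth J' ∧ regQuot J' ≤ regQuot J := by
  classical
  induction F using Finset.induction_on with
  | empty =>
    intro J J' hJ hJ' _ h
    have : J = J' := hJ.eq_of hJ' (by simpa [indF] using h)
    rw [this]; exact ⟨le_rfl, le_rfl⟩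
  | insert i F hi ih =>
    intro J J' hJ hJ' h1 h
    let J1 : Ideal RR := Ideal.span ((fun e => monomial e (1 : k)) ''
      {e | monomial (e + Finsupp.single i 1) (1 : k) ∈ J})
    have hJ1 : MI J1 := MI_span _
    have hmem : ∀ e, monomial (e + Finsupp.single i 1) (1 : k) ∈ J ↔ monomial e (1 : k) ∈ J1 := by
      intro e
      constructor
      · intro he; exact Ideal.subset_span ⟨e, he, rfl⟩
      · intro he
        obtain ⟨t, ht, hle⟩ := mem_ideal_span_monomial_image.mp he e (by simp [mem_support_iff])
        exact MI.mono (by gcongr) ht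
    have hind : indF (insert i F) = indF F + Finsupp.single i 1 := by
      rw [indF, Finset.sum_insert hi, add_comm]; rfl
    have h2 : ∀ e, monomial (e + indF F) (1 : k) ∈ J1 ↔ monomial e (1 : k) ∈ J' := by
      intro e
      rw [← hmem, add_assoc, ← hind, h]
    have htop : J1 ≠ ⊤ := by
      intro ht
      apply h1
      rw [Ideal.eq_top_iff_one]
      exact (h2 0).1 (by rw [ht]; trivial)
    have a1 := var_step i hJ hJ1 htop hmem
    have a2 := ih hJ1 hJ' h1 h2
    exact ⟨a1.1.trans a2.1, a2.2.trans a1.2⟩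

end PartB6

/-- **Theorem.** Let `I` be the edge ideal of a hypergraph which contains a good leaf. Then
(i) the functions `t ↦ depth R/I^t` and `t ↦ depth R/\overline{I^t}` are non-increasing for
`t ≥ 1`, and (ii) the functions `t ↦ reg R/I^t` and `t ↦ reg R/\overline{I^t}` are
non-decreasing for `t ≥ 1`. -/
theorem depth_reg_powers_good_leaf {k : Type*} [Field k] {n : ℕ}
    (E : Set (Finset (Fin n))) (hgl : ∃ F : Finset (Fin n), IsGoodLeaf E F)
    (I : Ideal (MvPolynomial (Fin n) k)) (hI : I = edgeIdealH k E) :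
    ∀ t : ℕ, 1 ≤ t →
      (pdepth (I ^ (t + 1)) ≤ pdepth (I ^ t) ∧
        pdepth (intClos (I ^ (t + 1))) ≤ pdepth (intClos (I ^ t))) ∧
      (regQuot (I ^ t) ≤ regQuot (I ^ (t + 1)) ∧
        regQuot (intClos (I ^ t)) ≤ regQuot (intClos (I ^ (t + 1)))) := by
  intro t ht
  by_cases htop : I = ⊤
  · simp only [htop, Ideal.top_pow]
    exact ⟨⟨le_rfl, le_rfl⟩, ⟨le_rfl, le_rfl⟩⟩
  obtain ⟨F, hF⟩ := hgl
  have hpow : ∀ s : ℕ, 1 ≤ s → I ^ s ≠ ⊤ := by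
    intro s hs h
    apply htop
    rw [eq_top_iff, ← h]
    exact Ideal.pow_le_self (by omega)
  have hMI : ∀ t i, MI ((I ^ t) ^ i) := by
    intro t i; rw [← pow_mul, hI]; exact MI_edge_pow _ _
  have hcl : intClos (I ^ t) ≠ ⊤ := by
    intro h
    have h1 : monomial 0 (1 : k) ∈ intClos (I ^ t) := by rw [h]; trivial
    rw [mem_intClos_iff _ (hMI t)] at h1
    obtain ⟨s, hs, h2⟩ := h1
    rw [smul_zero, ← pow_mul] at h2
    exact hpow (t * s) (Nat.mul_pos ht hs) ((Ideal.eq_top_iff_one _).mpr h2)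
  have a1 := set_step (k := k) F (J := I ^ (t + 1)) (J' := I ^ t) (by rw [hI]; exact MI_edge_pow _ _)
    (by rw [hI]; exact MI_edge_pow _ _) (hpow t ht) (by rw [hI]; exact colon_pow hF t)
  have a2 := set_step (k := k) F (J := intClos (I ^ (t + 1))) (J' := intClos (I ^ t))
    (MI_intClos _ (hMI _)) (MI_intClos _ (hMI _)) hcl (by rw [hI]; exact colon_intClos hF t)
  exact ⟨⟨a1.1, a2.1⟩, ⟨a1.2, a2.2⟩⟩
end

section
/- Let R be a positively graded algebra over a field, let I ⊆ R be a graded ideal, and let f ∈ R be a nonzero form that is a non-zerodivisor on R/I^t for all t ≤ s. Then depth R/(I,f)^s = min_{1 ≤ t ≤ s} depth R/I^t − 1. -/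
namespace DepthPowers
open CategoryTheory CategoryTheory.Abelian
universe u
variable {R : Type u} [CommRing R]

/-- multiplication by `f`, as a map `R/A → R/B`. -/
def mulQ (f : R) (A B : Ideal R) (h : ∀ g, f * g ∈ B ↔ g ∈ A) : (R ⧸ A) →ₗ[R] (R ⧸ B) :=
  Submodule.mapQ A B (LinearMap.lsmul R R f) (fun g hg => (h g).2 hg)

/-- the projection `R/B → R/C`. -/
def projQ (B C : Ideal R) (h : B ≤ C) : (R ⧸ B) →ₗ[R] (R ⧸ C) :=
  Submodule.mapQ B C LinearMap.id h

lemma mulQ_mk (f : R) (A B : Ideal R) (h : ∀ g, f * g ∈ B ↔ g ∈ A) (g : R) :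
    mulQ f A B h (Submodule.Quotient.mk g) = Submodule.Quotient.mk (f * g) := rfl

lemma projQ_mk (B C : Ideal R) (h : B ≤ C) (g : R) :
    projQ B C h (Submodule.Quotient.mk g) = Submodule.Quotient.mk g := rfl

lemma mulQ_inj (f : R) (A B : Ideal R) (h : ∀ g, f * g ∈ B ↔ g ∈ A) :
    Function.Injective (mulQ f A B h) := by
  rw [← LinearMap.ker_eq_bot, LinearMap.ker_eq_bot']
  intro x hx
  obtain ⟨g, rfl⟩ := Submodule.Quotient.mk_surjective _ x
  rw [mulQ_mk, Submodule.Quotient.mk_eq_zero, h] at hx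
  rwa [Submodule.Quotient.mk_eq_zero]

lemma projQ_surj (B C : Ideal R) (h : B ≤ C) : Function.Surjective (projQ B C h) := by
  intro x
  obtain ⟨g, rfl⟩ := Submodule.Quotient.mk_surjective _ x
  exact ⟨Submodule.Quotient.mk g, rfl⟩

lemma exact_mul_proj (f : R) (A B C : Ideal R) (h : ∀ g, f * g ∈ B ↔ g ∈ A)
    (hC : C = B ⊔ Ideal.span {f}) (hBC : B ≤ C) :
    Function.Exact (mulQ f A B h) (projQ B C hBC) := by
  intro x
  obtain ⟨g, rfl⟩ := Submodule.Quotient.mk_surjective _ x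
  rw [projQ_mk, Submodule.Quotient.mk_eq_zero, hC]
  constructor
  · intro hg
    obtain ⟨b, hb, c, hc, rfl⟩ := Submodule.mem_sup.1 hg
    obtain ⟨r, rfl⟩ := Ideal.mem_span_singleton'.1 hc
    refine ⟨Submodule.Quotient.mk r, ?_⟩
    rw [mulQ_mk, Submodule.Quotient.eq]
    have : f * r - (b + r * f) = -b := by ring
    rw [this]
    exact neg_mem hb
  · rintro ⟨y, hy⟩
    obtain ⟨r, rfl⟩ := Submodule.Quotient.mk_surjective _ y
    rw [mulQ_mk, Submodule.Quotient.eq] at hy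
    have : g = -(f * r - g) + r * f := by ring
    rw [this]
    exact add_mem (Ideal.mem_sup_left (neg_mem hy))
      (Ideal.mem_sup_right (Ideal.mem_span_singleton'.2 ⟨r, rfl⟩))

/-- `R/K` as an object of the module category. -/
abbrev Q (K : Ideal R) : ModuleCat.{u} R := ModuleCat.of R (R ⧸ K)

/-- the vanishing of `Ext^i (X, R/K)`. -/
abbrev E (X : ModuleCat.{u} R) (K : Ideal R) (i : ℕ) : Prop := Subsingleton (Ext X (Q K) i)

/-- the short complex. -/
abbrev sc (f : R) (A B C : Ideal R) (h : ∀ g, f * g ∈ B ↔ g ∈ A)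
    (hC : C = B ⊔ Ideal.span {f}) (hBC : B ≤ C) : ShortComplex (ModuleCat.{u} R) :=
  ModuleCat.shortComplexOfCompEqZero (mulQ f A B h) (projQ B C hBC)
    (exact_mul_proj f A B C h hC hBC).linearMap_comp_eq_zero

lemma sc_exact (f : R) (A B C : Ideal R) (h : ∀ g, f * g ∈ B ↔ g ∈ A)
    (hC : C = B ⊔ Ideal.span {f}) (hBC : B ≤ C) : (sc f A B C h hC hBC).ShortExact :=
  ModuleCat.shortComplex_shortExact _ (exact_mul_proj f A B C h hC hBC)
    (mulQ_inj f A B h) (projQ_surj B C hBC)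

section
variable (X : ModuleCat.{u} R) {f : R} {A B C : Ideal R} (h : ∀ g, f * g ∈ B ↔ g ∈ A)
    (hC : C = B ⊔ Ideal.span {f})
include h hC

lemma E_mid {i : ℕ} (hA : E X A i) (hC' : E X C i) : E X B i := by
  have hBC : B ≤ C := hC ▸ le_sup_left
  refine subsingleton_of_forall_eq 0 fun x => ?_
  obtain ⟨y, rfl⟩ := Ext.covariant_sequence_exact₂ X (sc_exact f A B C h hC hBC) x
    (hC'.elim _ _)
  rw [show y = 0 from hA.elim _ _, Ext.zero_comp]

lemma E_third {i : ℕ} (hB : E X B i) (hA : E X A (i + 1)) : E X C i := by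
  have hBC : B ≤ C := hC ▸ le_sup_left
  refine subsingleton_of_forall_eq 0 fun x => ?_
  obtain ⟨y, rfl⟩ := Ext.covariant_sequence_exact₃ X (sc_exact f A B C h hC hBC) x rfl
    (hA.elim _ _)
  rw [show y = 0 from hB.elim _ _, Ext.zero_comp]

lemma E_first {i : ℕ} (hC' : E X C i) (hB : E X B (i + 1)) : E X A (i + 1) := by
  have hBC : B ≤ C := hC ▸ le_sup_left
  refine subsingleton_of_forall_eq 0 fun x => ?_
  obtain ⟨y, rfl⟩ := Ext.covariant_sequence_exact₁ X (sc_exact f A B C h hC hBC) x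
    (hB.elim _ _) rfl
  rw [show y = 0 from hC'.elim _ _, Ext.zero_comp]

lemma E_first_zero (hB : E X B 0) : E X A 0 := by
  have hBC : B ≤ C := hC ▸ le_sup_left
  have := (sc_exact f A B C h hC hBC).mono_f
  exact (Ext.postcomp_mk₀_injective_of_mono X (sc f A B C h hC hBC).f).subsingleton

lemma E_factor {B' : Ideal R} (hBB' : B ≤ B') (hB'C : B' ≤ C) {i : ℕ}
    (hB : E X B' i) (hA : E X A (i + 1)) : E X C i := by
  have hBC : B ≤ C := hC ▸ le_sup_left
  refine subsingleton_of_forall_eq 0 fun x => ?_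
  obtain ⟨y, rfl⟩ := Ext.covariant_sequence_exact₃ X (sc_exact f A B C h hC hBC) x rfl
    (hA.elim _ _)
  have hg : (sc f A B C h hC hBC).g =
      ModuleCat.ofHom (projQ B B' hBB') ≫ ModuleCat.ofHom (projQ B' C hB'C) := by
    apply ModuleCat.hom_ext
    apply LinearMap.ext
    intro z
    obtain ⟨g, rfl⟩ := Submodule.Quotient.mk_surjective _ z
    rfl
  rw [hg, ← Ext.mk₀_comp_mk₀, ← Ext.comp_assoc_of_third_deg_zero]
  rw [show y.comp (Ext.mk₀ (ModuleCat.ofHom (projQ B B' hBB'))) (add_zero i) = 0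
    from hB.elim _ _, Ext.zero_comp]

end

section
variable (X : ModuleCat.{u} R) {f : R} (hfX : f ∈ Module.annihilator R X) {A C : Ideal R}
    (h : ∀ g, f * g ∈ A ↔ g ∈ A) (hC : C = A ⊔ Ideal.span {f})
include h hC hfX

lemma comp_f_eq_zero (hAC : A ≤ C) {i : ℕ} (x : Ext X (Q A) i) :
    x.comp (Ext.mk₀ (sc f A A C h hC hAC).f) (add_zero i) = 0 := by
  have hf : (sc f A A C h hC hAC).f = f • 𝟙 (Q A) := by
    apply ModuleCat.hom_ext
    apply LinearMap.ext
    intro z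
    obtain ⟨g, rfl⟩ := Submodule.Quotient.mk_surjective _ z
    rfl
  rw [hf]
  have := Ext.postcomp_smul_id_eq_zero_of_mem_annihilator (N := X) (M := Q A) hfX i
  exact DFunLike.congr_fun (congrArg AddCommGrpCat.Hom.hom this) x

lemma E_reg_zero : E X A 0 := by
  have hAC : A ≤ C := hC ▸ le_sup_left
  have := (sc_exact f A A C h hC hAC).mono_f
  refine subsingleton_of_forall_eq 0 fun x => ?_
  apply Ext.postcomp_mk₀_injective_of_mono X (sc f A A C h hC hAC).f
  rw [map_zero]
  exact comp_f_eq_zero X hfX h hC hAC x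

lemma E_reg_succ {i : ℕ} (hC' : E X C i) : E X A (i + 1) := by
  have hAC : A ≤ C := hC ▸ le_sup_left
  refine subsingleton_of_forall_eq 0 fun x => ?_
  obtain ⟨y, rfl⟩ := Ext.covariant_sequence_exact₁ X (sc_exact f A A C h hC hAC) x
    (comp_f_eq_zero X hfX h hC hAC x) rfl
  rw [show y = 0 from hC'.elim _ _, Ext.zero_comp]

lemma D_reg (n : ℕ) : (∀ i < n, E X C i) ↔ ∀ i < n + 1, E X A i := by
  constructor
  · intro H i hi
    cases i with
    | zero => exact E_reg_zero X hfX h hC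
    | succ i => exact E_reg_succ X hfX h hC (H i (by omega))
  · intro H i hi
    exact E_third X h hC (H i (by omega)) (H (i + 1) (by omega))
end

lemma E_top (X : ModuleCat.{u} R) (i : ℕ) : E X ⊤ i := by
  have : Subsingleton (R ⧸ (⊤ : Ideal R)) := Ideal.Quotient.subsingleton_iff.2 rfl
  have hz : Limits.IsZero (Q (⊤ : Ideal R)) := ModuleCat.isZero_of_subsingleton _
  refine subsingleton_of_forall_eq 0 fun x => ?_
  have h1 : x.comp (Ext.mk₀ (𝟙 _)) (add_zero i) = x := Ext.comp_mk₀_id x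
  rw [← h1, hz.eq_of_src (𝟙 _) 0, Ext.mk₀_zero, Ext.comp_zero]

/-- The key statement on vanishing. -/
lemma key (X : ModuleCat.{u} R) {f : R} (hfX : f ∈ Module.annihilator R X) (I : Ideal R)
    (s : ℕ) (hnzd : ∀ t : ℕ, t ≤ s → ∀ g : R, f * g ∈ I ^ t → g ∈ I ^ t) (n : ℕ) :
    (∀ i < n, E X ((I ⊔ Ideal.span {f}) ^ s) i) ↔
      ∀ t, t ≤ s → ∀ i < n + 1, E X (I ^ t) i := by
  induction s generalizing n with
  | zero =>
    simp only [pow_zero, Ideal.one_eq_top, nonpos_iff_eq_zero, forall_eq]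
    exact ⟨fun _ i _ => E_top X i, fun _ i _ => E_top X i⟩
  | succ s ih =>
    replace ih := fun n => ih (fun t ht => hnzd t (by omega)) n
    set J := I ⊔ Ideal.span {f} with hJ
    have hIJ : I ≤ J := le_sup_left
    have hfJ : f ∈ J := Ideal.mem_sup_right (Ideal.mem_span_singleton_self f)
    have hIs := hnzd (s + 1) le_rfl
    have hreg : ∀ t ≤ s + 1, ∀ g, f * g ∈ I ^ t ↔ g ∈ I ^ t := fun t ht g =>
      ⟨hnzd t ht g, fun hg => Ideal.mul_mem_left _ _ hg⟩
    -- `J^(s+1) = I^(s+1) + f J^s`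
    have hpow : J ^ (s + 1) = I ^ (s + 1) ⊔ Ideal.span {f} * J ^ s := by
      apply le_antisymm
      · clear ih hIs hreg hnzd
        induction s with
        | zero => simp [hJ]
        | succ s ihs =>
          rw [pow_succ' J, hJ, Ideal.sup_mul, ← hJ]
          refine sup_le ?_ le_sup_right
          refine (Ideal.mul_mono_right ihs).trans ?_
          rw [Ideal.mul_sup, ← pow_succ']
          refine sup_le_sup le_rfl ?_
          rw [mul_left_comm, pow_succ' J]
          exact Ideal.mul_mono_right (Ideal.mul_mono_left hIJ)
      · refine sup_le (Ideal.pow_right_mono hIJ _) ?_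
        rw [pow_succ']
        exact Ideal.mul_mono_left le_sup_right
    set C := I ^ (s + 1) ⊔ Ideal.span {f} with hCdef
    have h2 : ∀ g, f * g ∈ J ^ (s + 1) ↔ g ∈ J ^ s := by
      intro g
      constructor
      · intro hg
        rw [hpow] at hg
        obtain ⟨a, ha, b, hb, hab⟩ := Submodule.mem_sup.1 hg
        obtain ⟨c, hc, rfl⟩ := Ideal.mem_span_singleton_mul.1 hb
        have : g - c ∈ I ^ (s + 1) := by
          apply hIs
          rw [mul_sub, ← hab]
          simpa using ha
        have h3 : g - c ∈ J ^ s :=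
          Ideal.pow_right_mono hIJ _ (Ideal.pow_le_pow_right (Nat.le_succ s) this)
        simpa using add_mem h3 hc
      · intro hg
        rw [pow_succ']
        exact Ideal.mul_mem_mul hfJ hg
    have hC2 : C = J ^ (s + 1) ⊔ Ideal.span {f} := by
      rw [hpow, sup_assoc, sup_eq_right.2 (Ideal.mul_le_left : Ideal.span {f} * J ^ s ≤ Ideal.span {f})]
    have h3 : ∀ g, f * g ∈ I ^ (s + 1) ⊔ Ideal.span {f} * I ^ s ↔ g ∈ I ^ s := by
      intro g
      constructor
      · intro hg
        obtain ⟨a, ha, b, hb, hab⟩ := Submodule.mem_sup.1 hg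
        obtain ⟨c, hc, rfl⟩ := Ideal.mem_span_singleton_mul.1 hb
        have : g - c ∈ I ^ (s + 1) := by
          apply hIs
          rw [mul_sub, ← hab]
          simpa using ha
        simpa using add_mem (Ideal.pow_le_pow_right (Nat.le_succ s) this) hc
      · intro hg
        exact Ideal.mem_sup_right (Ideal.mul_mem_mul (Ideal.mem_span_singleton_self f) hg)
    have hC3 : C = (I ^ (s + 1) ⊔ Ideal.span {f} * I ^ s) ⊔ Ideal.span {f} := by
      rw [sup_assoc, sup_eq_right.2 (Ideal.mul_le_left : Ideal.span {f} * I ^ s ≤ Ideal.span {f})]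
    have hBB' : I ^ (s + 1) ⊔ Ideal.span {f} * I ^ s ≤ J ^ (s + 1) := by
      rw [hpow]
      exact sup_le_sup le_rfl (Ideal.mul_mono_right (Ideal.pow_right_mono hIJ _))
    have hB'C : J ^ (s + 1) ≤ C := hC2 ▸ le_sup_left
    have hCD := D_reg X hfX (hreg (s + 1) le_rfl) hCdef
    constructor
    · intro H
      induction n with
      | zero =>
        intro t ht
        exact (D_reg X hfX (hreg t ht) rfl 0).1 (by simp)
      | succ n ihn =>
        have H1 := ihn (fun i hi => H i (by omega))
        have HA : ∀ i < n + 1, E X (J ^ s) i := by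
          intro i hi
          rcases Nat.lt_succ_iff_lt_or_eq.1 hi with hi | rfl
          · exact (ih n).2 (fun t ht => H1 t (by omega)) i hi
          · cases i with
            | zero => exact E_first_zero X h2 hC2 (H 0 (by omega))
            | succ i =>
              exact E_first X h2 hC2 ((hCD (i + 1)).2 (H1 (s + 1) le_rfl) i (by omega))
                (H (i + 1) (by omega))
        have HI := (ih (n + 1)).1 HA
        have HC : ∀ i < n + 1, E X C i := fun i hi =>
          E_factor X h3 hC3 hBB' hB'C (H i hi) (HI s le_rfl (i + 1) (by omega))
        intro t ht
        rcases Nat.le_succ_iff.1 ht with ht | rfl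
        · exact HI t ht
        · exact (hCD (n + 1)).1 HC
    · intro H i hi
      exact E_mid X h2 hC2 ((ih n).2 (fun t ht => H t (by omega)) i hi)
        ((hCD n).2 (H (s + 1) le_rfl) i hi)

lemma smul_top_lt {m K : Ideal R} (hm : m ≠ ⊤) (hK : K ≤ m) :
    m • (⊤ : Submodule R (R ⧸ K)) < ⊤ := by
  rw [lt_top_iff_ne_top]
  intro htop
  have h1 : m • (⊤ : Submodule R (R ⧸ K)) ≤ Submodule.map (Submodule.mkQ K) m := by
    rw [Submodule.smul_le]
    intro r hr x _
    obtain ⟨g, rfl⟩ := Submodule.Quotient.mk_surjective _ x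
    exact ⟨r * g, Ideal.mul_mem_right _ _ hr, rfl⟩
  rw [htop] at h1
  obtain ⟨a, ha, hab⟩ := h1 (x := Submodule.Quotient.mk 1) trivial
  rw [Submodule.mkQ_apply, Submodule.Quotient.eq] at hab
  apply hm
  rw [Ideal.eq_top_iff_one]
  simpa using sub_mem ha (hK hab)

lemma rees [IsNoetherianRing R] {m K : Ideal R} (hm : m ≠ ⊤) (hK : K ≤ m) (n : ℕ) :
    (∃ rs : List R, rs.length = n ∧ (∀ r ∈ rs, r ∈ m) ∧
      RingTheory.Sequence.IsRegular (R ⧸ K) rs) ↔ ∀ i < n, E (Q m) K i := by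
  have hs : Module.support R (Q m) = PrimeSpectrum.zeroLocus m := by
    rw [Module.support_eq_zeroLocus, Ideal.annihilator_quotient]
  constructor
  · rintro ⟨rs, rfl, h1, h2⟩
    exact ModuleCat.subsingleton_ext_of_exists_isRegular m (Q m) hs.subset (Q K)
      (smul_top_lt hm hK) rs h1 h2
  · intro h
    exact ModuleCat.exists_isRegular_of_exists_subsingleton_ext m n (Q K)
      (smul_top_lt hm hK) (Q m) hs h

lemma exists_not_E [IsNoetherianRing R] {m : Ideal R} (hm : m ≠ ⊤) (K : Ideal R) (hK : K ≤ m) :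
    ∃ i, ¬ E (Q m) K i := by
  induction K using IsNoetherian.induction with
  | hgt K ih =>
    by_contra! hall
    obtain ⟨rs, hlen, hmem, hreg⟩ := (rees hm hK 1).2 (fun i _ => hall i)
    obtain ⟨x, rfl⟩ := List.length_eq_one_iff.1 hlen
    have hx : x ∈ m := hmem x (by simp)
    have hxr : IsSMulRegular (R ⧸ K) x := by
      have := hreg.toIsWeaklyRegular
      rwa [RingTheory.Sequence.isWeaklyRegular_singleton_iff] at this
    have hr : ∀ g, x * g ∈ K ↔ g ∈ K := by
      intro g
      refine ⟨fun hg => ?_, fun hg => Ideal.mul_mem_left _ _ hg⟩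
      rw [← Submodule.Quotient.mk_eq_zero]
      apply hxr
      simp only [smul_zero]
      rw [← Submodule.Quotient.mk_smul, Submodule.Quotient.mk_eq_zero]
      exact hg
    have hxK : x ∉ K := by
      intro hxK
      apply hm
      rw [Ideal.eq_top_iff_one]
      exact hK ((hr 1).1 (by simpa using hxK))
    have hle : K ⊔ Ideal.span {x} ≤ m :=
      sup_le hK ((Ideal.span_singleton_le_iff_mem _).2 hx)
    have hlt : K < K ⊔ Ideal.span {x} := by
      refine lt_of_le_of_ne le_sup_left fun heq => hxK ?_
      rw [heq]
      exact Ideal.mem_sup_right (Ideal.mem_span_singleton_self x)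
    obtain ⟨i, hi⟩ := ih _ hlt hle
    exact hi (E_third (Q m) hr rfl (hall i) (hall (i + 1)))

lemma le_depth_iff [IsNoetherianRing R] {m K : Ideal R} (hm : m ≠ ⊤) (hK : K ≤ m) (n : ℕ) :
    n ≤ idealDepth m (R ⧸ K) ↔ ∀ i < n, E (Q m) K i := by
  unfold idealDepth
  simp_rw [rees hm hK]
  obtain ⟨N, hN⟩ := exists_not_E hm K hK
  have hb : BddAbove {d : ℕ | ∀ i < d, E (Q m) K i} := by
    refine ⟨N, fun d hd => ?_⟩
    by_contra! hlt
    exact hN (hd N hlt)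
  constructor
  · intro h i hi
    have := Nat.sSup_mem (s := {d : ℕ | ∀ i < d, E (Q m) K i}) ⟨0, by simp⟩ hb
    exact this i (by omega)
  · intro h
    exact le_csSup hb h

lemma depth_top (m : Ideal R) (K : Ideal R) (hK : K = ⊤) : idealDepth m (R ⧸ K) = 0 := by
  unfold idealDepth
  have : {d : ℕ | ∃ rs : List R, rs.length = d ∧ (∀ r ∈ rs, r ∈ m) ∧
    RingTheory.Sequence.IsRegular (R ⧸ K) rs} = ∅ := by
    rw [Set.eq_empty_iff_forall_notMem]
    rintro d ⟨rs, -, -, h⟩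
    have := h.nontrivial
    exact not_subsingleton (R ⧸ K) (Ideal.Quotient.subsingleton_iff.2 hK)
  rw [this, csSup_empty]
  rfl

lemma main_aux [IsNoetherianRing R] {m : Ideal R} (hm : m ≠ ⊤) (I : Ideal R) (hI : I ≤ m)
    (f : R) (hf : f ∈ m) (s : ℕ) (hs : 1 ≤ s)
    (hnzd : ∀ t : ℕ, t ≤ s → ∀ g : R, f * g ∈ I ^ t → g ∈ I ^ t) :
    idealDepth m (R ⧸ (I + Ideal.span {f}) ^ s)
      = sInf {e : ℕ | ∃ t : ℕ, 1 ≤ t ∧ t ≤ s ∧ e = idealDepth m (R ⧸ I ^ t)} - 1 := by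
  have hfX : f ∈ Module.annihilator R (Q m) := by
    rw [Ideal.annihilator_quotient]
    exact hf
  set S := {e : ℕ | ∃ t : ℕ, 1 ≤ t ∧ t ≤ s ∧ e = idealDepth m (R ⧸ I ^ t)} with hS
  have hne : S.Nonempty := ⟨_, 1, le_rfl, hs, rfl⟩
  have hle : ∀ n, n ≤ sInf S ↔ ∀ t, 1 ≤ t → t ≤ s → ∀ i < n, E (Q m) (I ^ t) i := by
    intro n
    rw [le_csInf_iff (OrderBot.bddBelow _) hne]
    constructor
    · intro h t h1 h2
      exact (le_depth_iff hm ((Ideal.pow_le_self (by omega)).trans hI) n).1 (h _ ⟨t, h1, h2, rfl⟩)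
    · rintro h _ ⟨t, h1, h2, rfl⟩
      exact (le_depth_iff hm ((Ideal.pow_le_self (by omega)).trans hI) n).2 (h t h1 h2)
  have hJ : (I + Ideal.span {f}) ^ s ≤ m :=
    (Ideal.pow_le_self (by omega)).trans (sup_le hI ((Ideal.span_singleton_le_iff_mem _).2 hf))
  have hkey : ∀ n, n ≤ idealDepth m (R ⧸ (I + Ideal.span {f}) ^ s) ↔ n + 1 ≤ sInf S := by
    intro n
    rw [le_depth_iff hm hJ, hle, Submodule.add_eq_sup, key (Q m) hfX I s hnzd n]
    constructor
    · intro h t _ ht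
      exact h t ht
    · intro h t ht
      rcases Nat.eq_zero_or_pos t with rfl | h1
      · intro i _
        rw [pow_zero, Ideal.one_eq_top]
        exact E_top _ i
      · exact h t h1 ht
  have h0 := (hkey 0).1 (Nat.zero_le _)
  apply eq_of_forall_le_iff
  intro n
  rw [hkey]
  omega

end DepthPowers

/-- **Theorem (depth of powers modulo a non-zerodivisor).** Let `R` be a positively graded
Noetherian algebra over a field `k` (graded by `𝒜` with `𝒜 0 = k·1`), let `I` be a graded
ideal of `R`, and let `f ≠ 0` be a form (of some positive degree) which is a
non-zerodivisor on `R/I^t` for all `t ≤ s`. Then, with `𝔪` the maximal homogeneous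
(irrelevant) ideal, `depth R/(I,f)^s = min_{1 ≤ t ≤ s} depth R/I^t - 1`. -/
theorem depth_powers_modulo_nonzerodivisor {k R : Type*} [Field k] [CommRing R]
    [IsNoetherianRing R] [Algebra k R] (𝒜 : ℕ → Submodule k R) [GradedAlgebra 𝒜]
    (h0 : 𝒜 0 = Submodule.span k {(1 : R)})
    (I : Ideal R) (hI : Ideal.IsHomogeneous 𝒜 I)
    (f : R) (hf0 : f ≠ 0) (d : ℕ) (hd : 0 < d) (hfd : f ∈ 𝒜 d)
    (s : ℕ) (hs : 1 ≤ s)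
    (hnzd : ∀ t : ℕ, t ≤ s → ∀ g : R, f * g ∈ I ^ t → g ∈ I ^ t) :
    idealDepth (HomogeneousIdeal.irrelevant 𝒜).toIdeal (R ⧸ (I + Ideal.span {f}) ^ s)
      = sInf {e : ℕ | ∃ t : ℕ, 1 ≤ t ∧ t ≤ s ∧
          e = idealDepth (HomogeneousIdeal.irrelevant 𝒜).toIdeal (R ⧸ I ^ t)} - 1 := by
  by_cases hIt : I = ⊤
  · subst hIt
    rw [DepthPowers.depth_top _ _ (by rw [Submodule.add_eq_sup, top_sup_eq, Ideal.top_pow])]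
    have : sInf {e : ℕ | ∃ t : ℕ, 1 ≤ t ∧ t ≤ s ∧
          e = idealDepth (HomogeneousIdeal.irrelevant 𝒜).toIdeal
            (R ⧸ (⊤ : Ideal R) ^ t)} ≤ 0 :=
      Nat.sInf_le ⟨1, le_rfl, hs, (DepthPowers.depth_top _ _ (by simp)).symm⟩
    omega
  · have : Nontrivial R := ⟨f, 0, hf0⟩
    apply DepthPowers.main_aux _ I _ f _ s hs hnzd
    · rw [Ideal.ne_top_iff_one]
      intro h1
      have h2 : GradedRing.proj 𝒜 0 (1 : R) = 0 := h1
      rw [GradedRing.proj_apply, DirectSum.decompose_of_mem_same 𝒜 (SetLike.GradedOne.one_mem)]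
        at h2
      exact one_ne_zero h2
    · intro x hx
      change GradedRing.proj 𝒜 0 x = 0
      rw [GradedRing.proj_apply]
      have h1 : (DirectSum.decompose 𝒜 x 0 : R) ∈ I := hI 0 hx
      have h2 : (DirectSum.decompose 𝒜 x 0 : R) ∈ Submodule.span k {(1 : R)} :=
        h0.le (SetLike.coe_mem _)
      obtain ⟨c, hc⟩ := Submodule.mem_span_singleton.1 h2
      by_contra hne
      have hc0 : c ≠ 0 := by
        rintro rfl
        exact hne (by rw [← hc, zero_smul])
      apply hIt
      rw [Ideal.eq_top_iff_one]
      have h3 : algebraMap k R c⁻¹ * (DirectSum.decompose 𝒜 x 0 : R) = 1 := by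
        rw [← hc, ← Algebra.smul_def, smul_smul, inv_mul_cancel₀ hc0, one_smul]
      rw [← h3]
      exact Ideal.mul_mem_left _ _ h1
    · exact HomogeneousIdeal.mem_irrelevant_of_mem 𝒜 hd hfd
end
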